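/- arXiv:2404.13763 — 2 statements merged into one kernel-verified Lean document; each statement's English description precedes it below -/
import Mathlib

section
/- For every fixed integer k ≥ 3, as the integer b → ∞, I(b,0,k) = b·log b + ζ(2)/(2b^{2k+1}) + kζ(2)/(2b^{2k+2}) + ((k² − k − 2)ζ(2) − 2ζ(3))/(4b^{2k+3}) + ((k³ − 3k² − 10k − 6)ζ(2) − 6kζ(3) + 6ζ(4))/(12b^{2k+4}) + O(b^{−2k−5}), the implied constant depending on k. -/
open Filter Asymptotics

/-- The Irwin harmonic sum `I(b,d,k)`: sum of `1/m` over positive integers `m`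
whose base-`b` digit list contains the digit `d` exactly `k` times. -/
noncomputable def irwinSum (b d k : ℕ) : ℝ :=
  ∑' m : ℕ, if 0 < m ∧ (Nat.digits b m).count d = k then (1 : ℝ) / m else 0

/-- `ζ(s) = ∑_{n ≥ 1} n^{-s}` for an integer exponent. -/
noncomputable def zetaR (s : ℕ) : ℝ := ∑' n : ℕ, 1 / ((n : ℝ) + 1) ^ s

/-!
Grouping the positive integers by their first digit and their number of digits writes `I(b,0,k)`
as `L_{k+1}(∑_{a < b-1} 1 / (a + 1 + y))`, where `L_k` sums a function over the base-`b` words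
with `k` zeros, the last of them at the end. By Gauss's multiplication formula this test function
is `A H - H + log b`, where `H(y) = ψ(y + 1) + γ` and `A` averages over the first digit. The
equation that relates `L_{k+1}` to `L_k` by splitting off the first digit therefore collapses the
sum to `b log b - b⁻¹ E_k(H(· / b))` with `E_k = L_k - L_{k+1}`.

Since `E_k` annihilates constants and `A` and `f ↦ f(· / b)` divide Lipschitz constants by `b`,
the same equation bounds `E_k` on Lipschitz functions by `O(b^{1-2k})`. It also gives a recursion
for the moments `E_k(y^i)` and determines `E_k(y)` in closed form, so the asymptotics follow by
expanding `H` at `0`.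
-/

namespace Irwin

open scoped unitInterval Topology NNReal

/-! ### Sums over digit words -/

/-- The map `y ↦ (c + y) / b` of `[0, 1]`, which puts the digit `c` in front of the base-`b`
expansion of `y`; the value is clamped to `[0, 1]` so that `b` and `c` are unrestricted. -/
noncomputable def prependDigit (b c : ℕ) : C(I, I) where
  toFun y := Set.projIcc 0 1 zero_le_one ((c + y) / b)
  continuous_toFun := by fun_prop

lemma coe_prependDigit {b c : ℕ} (hc : c < b) (y : I) :
    (prependDigit b c y : ℝ) = (c + y) / b := by
  have hb : (0 : ℝ) < b := by exact_mod_cast c.zero_le.trans_lt hc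
  have hcb : (c : ℝ) + 1 ≤ b := by exact_mod_cast hc
  have hmem : ((c : ℝ) + y) / b ∈ Set.Icc (0 : ℝ) 1 :=
    ⟨div_nonneg (add_nonneg c.cast_nonneg y.2.1) hb.le,
      (div_le_one hb).2 (by linarith [y.2.2])⟩
  exact congrArg Subtype.val (Set.projIcc_of_mem zero_le_one hmem)

lemma lipschitzWith_prependDigit (b c : ℕ) : LipschitzWith (b : ℝ≥0)⁻¹ (prependDigit b c) := by
  have haffine : LipschitzWith (b : ℝ≥0)⁻¹ fun y : I => ((c : ℝ) + y) / b :=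
    LipschitzWith.of_dist_le_mul fun x y => le_of_eq <| by
      rw [Real.dist_eq, Subtype.dist_eq, Real.dist_eq, div_sub_div_same,
        add_sub_add_left_eq_sub, abs_div, Nat.abs_cast, NNReal.coe_inv, NNReal.coe_natCast,
        div_eq_inv_mul]
  have hclamp := (LipschitzWith.projIcc (zero_le_one' ℝ)).comp haffine
  rwa [one_mul] at hclamp

/-- The operator `f ↦ f((c + ·) / b)`. -/
noncomputable def pull (b c : ℕ) : C(I, ℝ) →ₗ[ℝ] C(I, ℝ) :=
  (ContinuousMap.compCLM ℝ ℝ (prependDigit b c)).toLinearMap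

@[simp]
lemma pull_apply (b c : ℕ) (f : C(I, ℝ)) (y : I) : pull b c f y = f (prependDigit b c y) := rfl

@[simp]
lemma pull_one (b c : ℕ) : pull b c 1 = 1 := rfl

lemma norm_pull_le (b c : ℕ) (f : C(I, ℝ)) : ‖pull b c f‖ ≤ ‖f‖ :=
  (ContinuousMap.norm_le _ (norm_nonneg f)).2 fun _ => f.norm_coe_le_norm _

/-- The transfer operator of the base-`b` digit map: the average of `f((c + ·) / b)` over all
digits `c`. -/
noncomputable def digitAverage (b : ℕ) : C(I, ℝ) →ₗ[ℝ] C(I, ℝ) :=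
  (b : ℝ)⁻¹ • ∑ c ∈ Finset.range b, pull b c

lemma digitAverage_apply (b : ℕ) (f : C(I, ℝ)) :
    digitAverage b f = (b : ℝ)⁻¹ • ∑ c ∈ Finset.range b, pull b c f := by
  rw [digitAverage, LinearMap.smul_apply, LinearMap.sum_apply]

lemma digitAverage_one {b : ℕ} (hb : 0 < b) : digitAverage b 1 = 1 := by
  have hb' : (b : ℝ) ≠ 0 := by positivity
  ext y
  simp [digitAverage_apply, hb']

/-- The sum of `b ^ (1 - n) * f(0.w)` over the base-`b` words `w` of length `n` that contain the
digit `0` exactly `k` times and, if nonempty, end in it. -/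
noncomputable def levelFunctional (b : ℕ) : ℕ → ℕ → C(I, ℝ) →ₗ[ℝ] ℝ
  | 0, 0 => (b : ℝ) • (ContinuousMap.evalCLM ℝ 0).toLinearMap
  | 0, _ + 1 => 0
  | _ + 1, 0 => 0
  | n + 1, k + 1 => (b : ℝ)⁻¹ • (∑ c ∈ Finset.Ico 1 b, levelFunctional b n (k + 1) ∘ₗ pull b c
      + levelFunctional b n k ∘ₗ pull b 0)

lemma levelFunctional_succ_succ_apply (b n k : ℕ) (f : C(I, ℝ)) :
    levelFunctional b (n + 1) (k + 1) f = (b : ℝ)⁻¹ *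
      (∑ c ∈ Finset.Ico 1 b, levelFunctional b n (k + 1) (pull b c f)
        + levelFunctional b n k (pull b 0 f)) := by
  simp only [levelFunctional, LinearMap.smul_apply, LinearMap.add_apply, LinearMap.sum_apply,
    LinearMap.comp_apply, smul_eq_mul]

lemma sum_abs_levelFunctional_le (b N k : ℕ) (f : C(I, ℝ)) :
    ∑ n ∈ Finset.range N, |levelFunctional b n k f| ≤ b * ‖f‖ := by
  induction N generalizing k f with
  | zero => simpa using by positivity
  | succ N ih =>
    rw [Finset.sum_range_succ']
    cases k with
    | zero =>
      simpa [levelFunctional, abs_mul] using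
        mul_le_mul_of_nonneg_left (f.norm_coe_le_norm 0) b.cast_nonneg
    | succ k =>
      have hpull (j c : ℕ) : ∑ n ∈ Finset.range N, |levelFunctional b n j (pull b c f)|
          ≤ b * ‖f‖ :=
        (ih j _).trans (by gcongr; exact norm_pull_le b c f)
      calc ∑ n ∈ Finset.range N, |levelFunctional b (n + 1) (k + 1) f|
            + |levelFunctional b 0 (k + 1) f|
          ≤ ∑ n ∈ Finset.range N, (b : ℝ)⁻¹ *
              (∑ c ∈ Finset.Ico 1 b, |levelFunctional b n (k + 1) (pull b c f)|
                + |levelFunctional b n k (pull b 0 f)|) := by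
            rw [levelFunctional, LinearMap.zero_apply, abs_zero, add_zero]
            refine Finset.sum_le_sum fun n _ => ?_
            rw [levelFunctional_succ_succ_apply, abs_mul, abs_inv, Nat.abs_cast]
            gcongr
            exact (abs_add_le _ _).trans (add_le_add_left (Finset.abs_sum_le_sum_abs _ _) _)
        _ = (b : ℝ)⁻¹ *
              (∑ c ∈ Finset.Ico 1 b, ∑ n ∈ Finset.range N,
                |levelFunctional b n (k + 1) (pull b c f)|
                + ∑ n ∈ Finset.range N, |levelFunctional b n k (pull b 0 f)|) := by
            rw [← Finset.mul_sum, Finset.sum_add_distrib, Finset.sum_comm]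
        _ ≤ (b : ℝ)⁻¹ * (∑ _c ∈ Finset.Ico 1 b, b * ‖f‖ + b * ‖f‖) := by
            gcongr <;> exact hpull _ _
        _ ≤ b * ‖f‖ := by
            obtain rfl | hb := b.eq_zero_or_pos
            · simp
            · rw [Finset.sum_const, Nat.card_Ico, nsmul_eq_mul, Nat.cast_pred hb]
              refine le_of_eq ?_
              field_simp
              ring

lemma summable_levelFunctional (b k : ℕ) (f : C(I, ℝ)) :
    Summable fun n => levelFunctional b n k f :=
  Summable.of_abs (summable_of_sum_range_le (fun _ => abs_nonneg _)
    fun N => sum_abs_levelFunctional_le b N k f)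

/-- The sum of all `levelFunctional b n k` over the word length `n`. -/
noncomputable def irwinFunctional (b k : ℕ) : C(I, ℝ) →ₗ[ℝ] ℝ where
  toFun f := ∑' n, levelFunctional b n k f
  map_add' f g := by
    simp only [map_add]
    exact (summable_levelFunctional b k f).tsum_add (summable_levelFunctional b k g)
  map_smul' a f := by
    simp only [map_smul, smul_eq_mul, RingHom.id_apply]
    exact tsum_mul_left

lemma hasSum_irwinFunctional (b k : ℕ) (f : C(I, ℝ)) :
    HasSum (fun n => levelFunctional b n k f) (irwinFunctional b k f) :=
  (summable_levelFunctional b k f).hasSum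

lemma irwinFunctional_zero_apply (b : ℕ) (f : C(I, ℝ)) : irwinFunctional b 0 f = b * f 0 := by
  refine (tsum_eq_single 0 fun n hn => ?_).trans (by simp [levelFunctional])
  obtain ⟨n, rfl⟩ := Nat.exists_eq_succ_of_ne_zero hn
  rw [levelFunctional, LinearMap.zero_apply]

lemma abs_irwinFunctional_le (b k : ℕ) (f : C(I, ℝ)) : |irwinFunctional b k f| ≤ b * ‖f‖ :=
  le_of_tendsto (hasSum_irwinFunctional b k f).tendsto_sum_nat.abs <| Eventually.of_forall fun N =>
    (Finset.abs_sum_le_sum_abs _ _).trans (sum_abs_levelFunctional_le b N k f)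

/-- The relation between the functionals for `k` and `k + 1` occurrences of the digit `0`, got by
splitting off the first digit: that digit uses up an occurrence exactly when it is `0`. -/
def IsRenewalStep (b : ℕ) (D D' : C(I, ℝ) →ₗ[ℝ] ℝ) : Prop :=
  ∀ f, D' f = D' (digitAverage b f) + (b : ℝ)⁻¹ * (D (pull b 0 f) - D' (pull b 0 f))

lemma isRenewalStep_irwinFunctional {b : ℕ} (hb : 0 < b) (k : ℕ) :
    IsRenewalStep b (irwinFunctional b k) (irwinFunctional b (k + 1)) := by
  intro f
  have hfirst : HasSum (fun n => levelFunctional b (n + 1) (k + 1) f) ((b : ℝ)⁻¹ *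
      (∑ c ∈ Finset.Ico 1 b, irwinFunctional b (k + 1) (pull b c f)
        + irwinFunctional b k (pull b 0 f))) := by
    simp only [levelFunctional_succ_succ_apply]
    exact ((hasSum_sum fun c _ => hasSum_irwinFunctional b (k + 1) _).add
      (hasSum_irwinFunctional b k _)).mul_left _
  have hall := (hasSum_nat_add_iff' 1).2 (hasSum_irwinFunctional b (k + 1) f)
  rw [Finset.sum_range_one, levelFunctional, LinearMap.zero_apply, sub_zero] at hall
  rw [hall.unique hfirst, digitAverage_apply, map_smul, map_sum, smul_eq_mul,
    Finset.range_eq_Ico, Finset.sum_eq_sum_Ico_succ_bot hb]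
  ring

lemma IsRenewalStep.sub {b : ℕ} {D₁ D₁' D₂ D₂' : C(I, ℝ) →ₗ[ℝ] ℝ} (h₁ : IsRenewalStep b D₁ D₁')
    (h₂ : IsRenewalStep b D₂ D₂') : IsRenewalStep b (D₁ - D₂) (D₁' - D₂') := fun f => by
  simp only [LinearMap.sub_apply]
  linear_combination h₁ f - h₂ f

lemma IsRenewalStep.apply_one {b : ℕ} (hb : 0 < b) {D D' : C(I, ℝ) →ₗ[ℝ] ℝ}
    (h : IsRenewalStep b D D') : D' 1 = D 1 := by
  have hb' : (b : ℝ) ≠ 0 := by positivity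
  have h1 := h 1
  rw [digitAverage_one hb, pull_one] at h1
  field_simp at h1
  linarith

/-- The difference of the functionals for `k` and for `k + 1` occurrences of the digit `0`. -/
noncomputable def jump (b k : ℕ) : C(I, ℝ) →ₗ[ℝ] ℝ :=
  irwinFunctional b k - irwinFunctional b (k + 1)

lemma isRenewalStep_jump {b : ℕ} (hb : 0 < b) (k : ℕ) :
    IsRenewalStep b (jump b k) (jump b (k + 1)) :=
  (isRenewalStep_irwinFunctional hb k).sub (isRenewalStep_irwinFunctional hb (k + 1))

lemma jump_one {b : ℕ} (hb : 0 < b) (k : ℕ) : jump b k 1 = 0 :=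
  sub_eq_zero.2 ((isRenewalStep_irwinFunctional hb k).apply_one hb).symm

lemma irwinFunctional_one {b : ℕ} (hb : 0 < b) (k : ℕ) : irwinFunctional b k 1 = b := by
  induction k with
  | zero => simp [irwinFunctional_zero_apply]
  | succ k ih => rw [(isRenewalStep_irwinFunctional hb k).apply_one hb, ih]

/-! ### The Irwin sum as a sum over digit words -/

lemma sum_range_mul {M : Type*} [AddCommMonoid M] (g : ℕ → M) (a s : ℕ) :
    ∑ m ∈ Finset.range (a * s), g m =
      ∑ q ∈ Finset.range a, ∑ r ∈ Finset.range s, g (q * s + r) := by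
  induction a with
  | zero => simp
  | succ a ih => rw [add_mul, one_mul, Finset.sum_range_add, ih, Finset.sum_range_succ]

/-- The summand of `irwinSum b 0 k`. -/
noncomputable def irwinTerm (b k m : ℕ) : ℝ :=
  if 0 < m ∧ (Nat.digits b m).count 0 = k then (1 : ℝ) / m else 0

lemma irwinTerm_nonneg (b k m : ℕ) : 0 ≤ irwinTerm b k m := by
  unfold irwinTerm
  positivity

lemma levelFunctional_one_apply {b : ℕ} (hb : 0 < b) (k : ℕ) (f : C(I, ℝ)) :
    levelFunctional b 1 k f = if k = 1 then f 0 else 0 := by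
  have hb' : (b : ℝ) ≠ 0 := by positivity
  have hzero : prependDigit b 0 0 = 0 := Subtype.ext <| by simp [coe_prependDigit hb]
  obtain - | - | k := k <;> simp [levelFunctional, hzero, hb']

lemma digits_mul_add {b c p : ℕ} (hb : 1 < b) (hp : 0 < p) (hc : c < b) :
    Nat.digits b (p * b + c) = c :: Nat.digits b p := by
  rw [mul_comm, add_comm, Nat.digits_add b hb c p hc (Or.inr hp.ne')]

-- If `p` has more than `k` zeros, then the truncated difference and both sides are `0`.
lemma sum_irwinTerm_block {b p : ℕ} (hb : 1 < b) (hp : 0 < p) (k n : ℕ) {f : C(I, ℝ)}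
    (hf : ∀ y, f y = ((p : ℝ) + y)⁻¹) :
    ∑ r ∈ Finset.range (b ^ n), irwinTerm b k (p * b ^ n + r) =
      levelFunctional b (n + 1) (k + 1 - (Nat.digits b p).count 0) f := by
  have hb0 : 0 < b := zero_lt_one.trans hb
  induction n generalizing p f with
  | zero =>
    have hindex : k + 1 - (Nat.digits b p).count 0 = 1 ↔ (Nat.digits b p).count 0 = k := by omega
    simp [irwinTerm, levelFunctional_one_apply hb0, hp, hindex, hf]
  | succ n ih =>
    have hchild (c : ℕ) (hc : c < b) :
        ∑ r ∈ Finset.range (b ^ n), irwinTerm b k (p * b ^ (n + 1) + (c * b ^ n + r)) =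
          (b : ℝ)⁻¹ * levelFunctional b (n + 1)
            (k + 1 - (c :: Nat.digits b p).count 0) (pull b c f) := by
      have hq : 0 < p * b + c := by positivity
      rw [← smul_eq_mul (b : ℝ)⁻¹, ← map_smul, ← digits_mul_add hb hp hc, ← ih hq]
      · exact Finset.sum_congr rfl fun r _ => by congr 1; ring
      · intro y
        have hb' : (b : ℝ) ≠ 0 := by positivity
        rw [ContinuousMap.smul_apply, pull_apply, hf, coe_prependDigit hc, smul_eq_mul,
          ← mul_inv]
        push_cast
        congr 1
        field_simp
        ring
    have hnonzero (c : ℕ) (hc : c ∈ Finset.Ico 1 b) :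
        ∑ r ∈ Finset.range (b ^ n), irwinTerm b k (p * b ^ (n + 1) + (c * b ^ n + r)) =
          (b : ℝ)⁻¹ * levelFunctional b (n + 1)
            (k + 1 - (Nat.digits b p).count 0) (pull b c f) := by
      obtain ⟨hc1, hcb⟩ := Finset.mem_Ico.1 hc
      rw [hchild c hcb, List.count_cons_of_ne (by omega)]
    rw [pow_succ', sum_range_mul, ← pow_succ', Finset.range_eq_Ico,
      Finset.sum_eq_sum_Ico_succ_bot hb0, hchild 0 hb0, List.count_cons_self, ← Nat.sub_sub,
      Finset.sum_congr rfl hnonzero, ← Finset.mul_sum]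
    cases k + 1 - (Nat.digits b p).count 0 with
    | zero => simp [levelFunctional]
    | succ j => rw [levelFunctional_succ_succ_apply, Nat.add_sub_cancel, mul_add, add_comm]

/-- The function `y ↦ 1 / (a + 1 + y)` on `[0, 1]`. -/
noncomputable def reciprocal (a : ℕ) : C(I, ℝ) where
  toFun y := ((a : ℝ) + 1 + y)⁻¹
  continuous_toFun := by
    refine Continuous.inv₀ (by fun_prop) fun y => ?_
    have := y.2.1
    positivity

lemma sum_range_pow_irwinTerm {b : ℕ} (hb : 1 < b) (k N : ℕ) :
    ∑ m ∈ Finset.range (b ^ N), irwinTerm b k m =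
      ∑ n ∈ Finset.range (N + 1),
        levelFunctional b n (k + 1) (∑ a ∈ Finset.range (b - 1), reciprocal a) := by
  induction N with
  | zero => simp [irwinTerm, levelFunctional]
  | succ N ih =>
    have hblock (a : ℕ) (ha : a ∈ Finset.range (b - 1)) :
        ∑ r ∈ Finset.range (b ^ N), irwinTerm b k ((a + 1) * b ^ N + r) =
          levelFunctional b (N + 1) (k + 1) (reciprocal a) := by
      have hdigits : Nat.digits b (a + 1) = [a + 1] :=
        Nat.digits_of_lt b _ a.succ_ne_zero (by have := Finset.mem_range.1 ha; omega)
      have h := sum_irwinTerm_block hb a.succ_pos k N (f := reciprocal a)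
        fun y => by simp [reciprocal]
      simpa [hdigits] using h
    rw [Finset.sum_range_succ _ (N + 1), ← ih, map_sum, ← Finset.sum_congr rfl hblock, pow_succ',
      sum_range_mul, show b = b - 1 + 1 by omega, Finset.sum_range_succ', add_comm]
    simp

lemma irwinSum_zero_eq_irwinFunctional {b : ℕ} (hb : 1 < b) (k : ℕ) :
    irwinSum b 0 k =
      irwinFunctional b (k + 1) (∑ a ∈ Finset.range (b - 1), reciprocal a) := by
  refine HasSum.tsum_eq (f := irwinTerm b k) ?_
  rw [hasSum_iff_tendsto_nat_of_nonneg (irwinTerm_nonneg b k),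
    tendsto_iff_tendsto_subseq_of_monotone
      (monotone_nat_of_le_succ fun n => by
        rw [Finset.sum_range_succ]
        exact le_add_of_nonneg_right (irwinTerm_nonneg b k n))
      (tendsto_pow_atTop_atTop_of_one_lt hb)]
  simp only [Function.comp_def, sum_range_pow_irwinTerm hb]
  exact (hasSum_irwinFunctional b (k + 1) _).tendsto_sum_nat.comp (tendsto_add_atTop_nat 1)

/-! ### Harmonic numbers with real index -/

lemma hasSum_zetaR {s : ℕ} (hs : 1 < s) :
    HasSum (fun n : ℕ => 1 / ((n : ℝ) + 1) ^ s) (zetaR s) := by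
  have hsummable := (summable_nat_add_iff 1).2 (Real.summable_one_div_nat_pow.2 hs)
  exact Summable.hasSum (by simpa only [Nat.cast_add, Nat.cast_one] using hsummable)

lemma abs_pow_div_add_sub_le {m s t : ℝ} (hm : 0 < m) (hs : 0 ≤ s) (ht : 0 ≤ t) (p : ℕ) :
    |s ^ (p + 1) / (m + s) - t ^ (p + 1) / (m + t)| ≤ |s ^ (p + 1) - t ^ (p + 1)| / m := by
  wlog hst : s ≤ t generalizing s t
  · rw [abs_sub_comm, abs_sub_comm (s ^ (p + 1))]
    exact this ht hs (le_of_not_ge hst)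
  have hpow : s ^ p ≤ t ^ p := pow_le_pow_left₀ hs hst p
  have hpow' : s ^ (p + 1) ≤ t ^ (p + 1) := pow_le_pow_left₀ hs hst (p + 1)
  have hmono : s ^ (p + 1) / (m + s) ≤ t ^ (p + 1) / (m + t) := by
    rw [div_le_div_iff₀ (by positivity) (by positivity)]
    nlinarith [mul_le_mul_of_nonneg_left hpow (mul_nonneg hs ht), pow_succ s p, pow_succ t p]
  rw [abs_sub_comm, abs_sub_comm (s ^ (p + 1)), abs_of_nonneg (sub_nonneg.2 hmono),
    abs_of_nonneg (sub_nonneg.2 hpow')]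
  calc t ^ (p + 1) / (m + t) - s ^ (p + 1) / (m + s)
      ≤ t ^ (p + 1) / (m + t) - s ^ (p + 1) / (m + t) := by gcongr
    _ = (t ^ (p + 1) - s ^ (p + 1)) / (m + t) := div_sub_div_same _ _ _
    _ ≤ (t ^ (p + 1) - s ^ (p + 1)) / m :=
      div_le_div_of_nonneg_left (sub_nonneg.2 hpow') hm (le_add_of_nonneg_right ht)

/-- The harmonic number `H_t = ψ(t + 1) + γ` with real index `t ≥ 0`. -/
noncomputable def realHarmonic (t : ℝ) : ℝ := ∑' a : ℕ, (1 / ((a : ℝ) + 1) - 1 / (a + 1 + t))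

/-- The error of the `N`-th Taylor polynomial of `realHarmonic` at `0`. -/
noncomputable def harmonicRemainder (N : ℕ) (t : ℝ) : ℝ :=
  realHarmonic t - ∑ i ∈ Finset.range N, (-1) ^ i * zetaR (i + 2) * t ^ (i + 1)

lemma hasSum_harmonicRemainder (N : ℕ) {t : ℝ} (ht : 0 ≤ t) :
    HasSum (fun a : ℕ => (-1) ^ N * (t ^ (N + 1) / (a + 1 + t)) / ((a : ℝ) + 1) ^ (N + 1))
      (harmonicRemainder N t) := by
  induction N with
  | zero =>
    have hterm (a : ℕ) : (-1) ^ 0 * (t ^ (0 + 1) / (a + 1 + t)) / ((a : ℝ) + 1) ^ (0 + 1) =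
        1 / ((a : ℝ) + 1) - 1 / (a + 1 + t) := by
      field_simp
      ring
    simp only [hterm, harmonicRemainder, Finset.range_zero, Finset.sum_empty, sub_zero]
    refine (Summable.of_nonneg_of_le (fun a => ?_) (fun a => ?_)
      ((hasSum_zetaR one_lt_two).summable.mul_left t)).hasSum
    · exact sub_nonneg.2 (one_div_le_one_div_of_le (by positivity) (le_add_of_nonneg_right ht))
    · rw [← hterm a]
      have : t / (a + 1 + t) ≤ t / (a + 1) :=
        div_le_div_of_nonneg_left ht (by positivity) (le_add_of_nonneg_right ht)
      calc (-1) ^ 0 * (t ^ (0 + 1) / (a + 1 + t)) / ((a : ℝ) + 1) ^ (0 + 1)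
          ≤ (t / (a + 1)) / (a + 1) := by simpa using by gcongr
        _ = t * (1 / ((a : ℝ) + 1) ^ 2) := by field_simp
  | succ N ih =>
    have hvalue : harmonicRemainder (N + 1) t =
        harmonicRemainder N t - (-1) ^ N * t ^ (N + 1) * zetaR (N + 2) := by
      simp only [harmonicRemainder, Finset.sum_range_succ]
      ring
    have hterm (a : ℕ) :
        (-1) ^ (N + 1) * (t ^ (N + 2) / (a + 1 + t)) / ((a : ℝ) + 1) ^ (N + 2) =
          (-1) ^ N * (t ^ (N + 1) / (a + 1 + t)) / ((a : ℝ) + 1) ^ (N + 1)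
            - (-1) ^ N * t ^ (N + 1) * (1 / ((a : ℝ) + 1) ^ (N + 2)) := by
      field_simp
      ring
    simpa only [hvalue, hterm] using
      ih.sub ((hasSum_zetaR (by omega : 1 < N + 2)).mul_left ((-1) ^ N * t ^ (N + 1)))

lemma abs_harmonicRemainder_sub_le (N : ℕ) {s t : ℝ} (hs : 0 ≤ s) (ht : 0 ≤ t) :
    |harmonicRemainder N s - harmonicRemainder N t| ≤
      zetaR (N + 2) * |s ^ (N + 1) - t ^ (N + 1)| := by
  have hbound := (hasSum_zetaR (by omega : 1 < N + 2)).mul_right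
    |s ^ (N + 1) - t ^ (N + 1)|
  refine ((hasSum_harmonicRemainder N hs).sub (hasSum_harmonicRemainder N ht)).norm_le_of_bounded
    hbound fun a => ?_
  have hm : (0 : ℝ) < a + 1 := by positivity
  rw [div_sub_div_same, ← mul_sub, Real.norm_eq_abs, abs_div, abs_mul, abs_pow, abs_neg, abs_one,
    one_pow, one_mul, abs_of_pos (pow_pos hm _)]
  calc _ ≤ |s ^ (N + 1) - t ^ (N + 1)| / (a + 1) / ((a : ℝ) + 1) ^ (N + 1) := by
        gcongr
        exact abs_pow_div_add_sub_le hm hs ht N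
    _ = 1 / ((a : ℝ) + 1) ^ (N + 2) * |s ^ (N + 1) - t ^ (N + 1)| := by
        field_simp
        ring

lemma zetaR_nonneg (s : ℕ) : 0 ≤ zetaR s := tsum_nonneg fun _ => by positivity

lemma abs_realHarmonic_sub_le {s t : ℝ} (hs : 0 ≤ s) (ht : 0 ≤ t) :
    |realHarmonic s - realHarmonic t| ≤ zetaR 2 * |s - t| := by
  simpa [harmonicRemainder] using abs_harmonicRemainder_sub_le 0 hs ht

lemma hasSum_realHarmonic {t : ℝ} (ht : 0 ≤ t) :
    HasSum (fun a : ℕ => 1 / ((a : ℝ) + 1) - 1 / (a + 1 + t)) (realHarmonic t) := by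
  convert hasSum_harmonicRemainder 0 ht using 1
  · ext a
    field_simp
    ring
  · simp [harmonicRemainder]

lemma realHarmonic_add_one {t : ℝ} (ht : 0 ≤ t) :
    realHarmonic (t + 1) = realHarmonic t + (t + 1)⁻¹ := by
  have hdiff := ((hasSum_realHarmonic (by positivity : 0 ≤ t + 1)).sub
    (hasSum_realHarmonic ht)).tendsto_sum_nat
  have htelescope (N : ℕ) : ∑ a ∈ Finset.range N,
      (1 / ((a : ℝ) + 1) - 1 / (a + 1 + (t + 1)) - (1 / ((a : ℝ) + 1) - 1 / (a + 1 + t))) =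
        (t + 1)⁻¹ - (N + (t + 1))⁻¹ := by
    have h := Finset.sum_range_sub' (fun a : ℕ => ((a : ℝ) + (t + 1))⁻¹) N
    rw [Nat.cast_zero, zero_add] at h
    rw [← h]
    refine Finset.sum_congr rfl fun a _ => ?_
    push_cast
    ring_nf
  have hlimit : Tendsto (fun N : ℕ => (t + 1)⁻¹ - ((N : ℝ) + (t + 1))⁻¹) atTop
      (𝓝 ((t + 1)⁻¹ - 0)) :=
    tendsto_const_nhds.sub
      (tendsto_natCast_atTop_atTop.atTop_add tendsto_const_nhds).inv_tendsto_atTop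
  have := tendsto_nhds_unique hdiff (hlimit.congr fun N => (htelescope N).symm)
  linarith

lemma realHarmonic_add_nat {t : ℝ} (ht : 0 ≤ t) (n : ℕ) :
    realHarmonic (t + n) = realHarmonic t + ∑ a ∈ Finset.range n, ((a : ℝ) + 1 + t)⁻¹ := by
  induction n with
  | zero => simp
  | succ n ih =>
    rw [Nat.cast_succ, ← add_assoc, realHarmonic_add_one (by positivity), ih,
      Finset.sum_range_succ, add_assoc, add_right_comm (n : ℝ), add_comm t]

lemma tendsto_log_sub_sum_inv {t : ℝ} (ht : 0 ≤ t) :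
    Tendsto (fun N : ℕ => Real.log N - ∑ a ∈ Finset.range N, ((a : ℝ) + 1 + t)⁻¹) atTop
      (𝓝 (realHarmonic t - Real.eulerMascheroniConstant)) := by
  refine ((hasSum_realHarmonic ht).tendsto_sum_nat.sub Real.tendsto_harmonic_sub_log).congr
    fun N => ?_
  simp only [Finset.sum_sub_distrib, one_div, harmonic, Rat.cast_sum, Rat.cast_inv, Nat.cast_add,
    Nat.cast_one, Rat.cast_add, Rat.cast_natCast, Rat.cast_one]
  abel

-- Gauss's multiplication formula for `ψ`, up to the shift by `b - 1`.
lemma sum_realHarmonic_div {b : ℕ} (hb : 0 < b) {t : ℝ} (ht : 0 ≤ t) :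
    ∑ c ∈ Finset.range b, realHarmonic ((c + t) / b) =
      b * realHarmonic (t + (b - 1 : ℕ)) - b * Real.log b := by
  have hb' : (b : ℝ) ≠ 0 := by positivity
  have hpartial (N : ℕ) (hN : 0 < N) :
      ∑ c ∈ Finset.range b,
        (Real.log N - ∑ a ∈ Finset.range N, ((a : ℝ) + 1 + (c + t) / b)⁻¹) =
      b * (Real.log (N * b : ℕ)
        - ∑ m ∈ Finset.range (N * b), ((m : ℝ) + 1 + (t + (b - 1 : ℕ)))⁻¹) - b * Real.log b := by
    have hN' : (N : ℝ) ≠ 0 := by positivity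
    have hterm (a c : ℕ) : ((a : ℝ) + 1 + (c + t) / b)⁻¹ =
        b * (((a * b + c : ℕ) : ℝ) + 1 + (t + (b - 1 : ℕ)))⁻¹ := by
      rw [← inv_inv (b : ℝ), ← mul_inv, inv_inv]
      push_cast [Nat.cast_pred hb]
      congr 1
      field_simp
      ring
    rw [Finset.sum_sub_distrib, Finset.sum_comm, sum_range_mul]
    simp only [hterm, ← Finset.mul_sum]
    rw [Nat.cast_mul, Real.log_mul hN' hb', Finset.sum_const, Finset.card_range, nsmul_eq_mul]
    ring
  have hleft := tendsto_finsetSum (Finset.range b) fun c _ =>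
    tendsto_log_sub_sum_inv (by positivity : 0 ≤ ((c : ℝ) + t) / b)
  have hright := (((tendsto_log_sub_sum_inv (by positivity : 0 ≤ t + (b - 1 : ℕ))).comp
    (tendsto_id.atTop_mul_const' hb)).const_mul (b : ℝ)).sub_const (b * Real.log b)
  have hunique := tendsto_nhds_unique hleft (hright.congr' ?_)
  · rw [Finset.sum_sub_distrib, Finset.sum_const, Finset.card_range, nsmul_eq_mul] at hunique
    linear_combination hunique
  · filter_upwards [eventually_gt_atTop 0] with N hN
    exact (hpartial N hN).symm

/-- `harmonicRemainder N` as a continuous function on `[0, 1]`. -/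
noncomputable def harmonicRemainderMap (N : ℕ) : C(I, ℝ) where
  toFun y := harmonicRemainder N y
  continuous_toFun := by
    have hlip : LipschitzWith (zetaR 2).toNNReal fun y : I => realHarmonic y :=
      LipschitzWith.of_dist_le_mul fun x y => by
        simpa [Real.dist_eq, Subtype.dist_eq, zetaR_nonneg] using
          abs_realHarmonic_sub_le x.2.1 y.2.1
    have := hlip.continuous
    unfold harmonicRemainder
    fun_prop

lemma digitAverage_harmonicRemainderMap_zero {b : ℕ} (hb : 0 < b) :
    digitAverage b (harmonicRemainderMap 0) =
      harmonicRemainderMap 0 + ∑ a ∈ Finset.range (b - 1), reciprocal a - Real.log b • 1 := by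
  have hb' : (b : ℝ) ≠ 0 := by positivity
  ext y
  have hpull (c : ℕ) (hc : c ∈ Finset.range b) :
      pull b c (harmonicRemainderMap 0) y = realHarmonic ((c + y) / b) := by
    simp [harmonicRemainderMap, harmonicRemainder, coe_prependDigit (Finset.mem_range.1 hc)]
  have hself : harmonicRemainderMap 0 y = realHarmonic y := by
    simp [harmonicRemainderMap, harmonicRemainder]
  rw [digitAverage_apply, ContinuousMap.smul_apply, ContinuousMap.sum_apply,
    Finset.sum_congr rfl hpull, sum_realHarmonic_div hb y.2.1, realHarmonic_add_nat y.2.1,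
    ContinuousMap.sub_apply, ContinuousMap.add_apply, ContinuousMap.sum_apply, hself]
  simp only [reciprocal, ContinuousMap.coe_mk, ContinuousMap.smul_apply, ContinuousMap.one_apply,
    smul_eq_mul]
  field_simp

lemma irwinSum_zero_eq_jump {b : ℕ} (hb : 1 < b) (k : ℕ) :
    irwinSum b 0 k =
      b * Real.log b - (b : ℝ)⁻¹ * jump b k (pull b 0 (harmonicRemainderMap 0)) := by
  have hb0 : 0 < b := zero_lt_one.trans hb
  have hreciprocal : ∑ a ∈ Finset.range (b - 1), reciprocal a =
      digitAverage b (harmonicRemainderMap 0) - harmonicRemainderMap 0 + Real.log b • 1 := by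
    rw [digitAverage_harmonicRemainderMap_zero hb0]
    abel
  have hstep := isRenewalStep_irwinFunctional hb0 k (harmonicRemainderMap 0)
  rw [irwinSum_zero_eq_irwinFunctional hb, hreciprocal, map_add, map_sub, map_smul,
    irwinFunctional_one hb0, smul_eq_mul, jump, LinearMap.sub_apply]
  linear_combination -hstep

/-! ### Lipschitz bounds -/

lemma lipschitzWith_pull {K : ℝ≥0} {f : C(I, ℝ)} (hf : LipschitzWith K f) (b c : ℕ) :
    LipschitzWith (K * (b : ℝ≥0)⁻¹) (pull b c f) :=
  hf.comp (lipschitzWith_prependDigit b c)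

lemma lipschitzWith_digitAverage {K : ℝ≥0} {f : C(I, ℝ)} (hf : LipschitzWith K f) (b : ℕ) :
    LipschitzWith (K * (b : ℝ≥0)⁻¹) (digitAverage b f) := by
  refine LipschitzWith.of_dist_le_mul fun x y => ?_
  have hpull (c : ℕ) : |pull b c f x - pull b c f y| ≤ K * (b : ℝ)⁻¹ * |(x : ℝ) - y| := by
    simpa [Real.dist_eq, Subtype.dist_eq] using (lipschitzWith_pull hf b c).dist_le_mul x y
  rw [digitAverage_apply, Real.dist_eq, Subtype.dist_eq, Real.dist_eq]
  simp only [ContinuousMap.smul_apply, ContinuousMap.sum_apply, smul_eq_mul]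
  rw [← mul_sub, ← Finset.sum_sub_distrib, abs_mul, abs_inv, Nat.abs_cast]
  calc (b : ℝ)⁻¹ * |∑ c ∈ Finset.range b, (pull b c f x - pull b c f y)|
      ≤ (b : ℝ)⁻¹ * (b * (K * (b : ℝ)⁻¹ * |(x : ℝ) - y|)) := by
        gcongr
        simpa using (Finset.abs_sum_le_sum_abs _ _).trans
          (Finset.sum_le_card_nsmul (Finset.range b) _ _ fun c _ => hpull c)
    _ ≤ K * (b : ℝ)⁻¹ * |(x : ℝ) - y| := by
        rw [← mul_assoc]
        exact mul_le_of_le_one_left (by positivity) (inv_mul_le_one_of_le₀ le_rfl b.cast_nonneg)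
    _ = _ := by push_cast; rfl

lemma norm_sub_smul_one_le {K : ℝ≥0} {f : C(I, ℝ)} (hf : LipschitzWith K f) (x : I) :
    ‖f - f x • 1‖ ≤ K := by
  refine (ContinuousMap.norm_le _ K.2).2 fun y => ?_
  have hdist : dist y x ≤ 1 := by
    rw [Subtype.dist_eq, Real.dist_eq, abs_le]
    exact ⟨by linarith [y.2.1, x.2.2], by linarith [y.2.2, x.2.1]⟩
  calc ‖(f - f x • 1) y‖ = dist (f y) (f x) := by simp [Real.dist_eq]
    _ ≤ K * dist y x := hf.dist_le_mul y x
    _ ≤ K := mul_le_of_le_one_right K.2 hdist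

lemma abs_le_of_norm_le_of_lipschitzWith {D : C(I, ℝ) →ₗ[ℝ] ℝ} {M : ℝ} (hM : 0 ≤ M)
    (hD : ∀ f, |D f| ≤ M * ‖f‖) (hD1 : D 1 = 0) {K : ℝ≥0} {f : C(I, ℝ)}
    (hf : LipschitzWith K f) : |D f| ≤ M * K :=
  calc |D f| = |D (f - f 0 • 1)| := by rw [map_sub, map_smul, hD1, smul_zero, sub_zero]
    _ ≤ M * ‖f - f 0 • 1‖ := hD _
    _ ≤ M * K := by gcongr; exact norm_sub_smul_one_le hf 0

-- Both `digitAverage b f` and `pull b 0 f` have Lipschitz constant `K / b`, so a bound `C * K`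
-- improves itself to `(3 / 4 * C + β) * K`; the fixed point is `4 * β`.
lemma abs_le_of_abs_le_digitAverage {b : ℕ} (hb : 1 < b) {D : C(I, ℝ) →ₗ[ℝ] ℝ} {M β : ℝ}
    (hM : 0 ≤ M) (hβ : 0 ≤ β) (hD : ∀ f, |D f| ≤ M * ‖f‖) (hD1 : D 1 = 0)
    (hstep : ∀ (K : ℝ≥0) (f : C(I, ℝ)), LipschitzWith K f →
      |D f| ≤ |D (digitAverage b f)| + (b : ℝ)⁻¹ * |D (pull b 0 f)| + β * K)
    {K : ℝ≥0} {f : C(I, ℝ)} (hf : LipschitzWith K f) : |D f| ≤ 4 * β * K := by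
  have hinv : (b : ℝ)⁻¹ ≤ 1 / 2 := by
    rw [← one_div]
    exact one_div_le_one_div_of_le two_pos (by exact_mod_cast hb)
  have hiterate (n : ℕ) (K : ℝ≥0) (f : C(I, ℝ)) (hf : LipschitzWith K f) :
      |D f| ≤ ((3 / 4) ^ n * M + 4 * β) * K := by
    induction n generalizing K f with
    | zero =>
      refine (abs_le_of_norm_le_of_lipschitzWith hM hD hD1 hf).trans ?_
      gcongr
      linarith
    | succ n ih =>
      set C : ℝ := (3 / 4) ^ n * M + 4 * β with hC
      have : 0 ≤ C := by positivity
      have hA := ih _ _ (lipschitzWith_digitAverage hf b)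
      have hS := ih _ _ (lipschitzWith_pull hf b 0)
      push_cast at hA hS
      calc |D f| ≤ |D (digitAverage b f)| + (b : ℝ)⁻¹ * |D (pull b 0 f)| + β * K :=
            hstep K f hf
        _ ≤ C * (K * (b : ℝ)⁻¹) + (b : ℝ)⁻¹ * (C * (K * (b : ℝ)⁻¹)) + β * K := by gcongr
        _ ≤ C * (K * (1 / 2)) + 1 / 2 * (C * (K * (1 / 2))) + β * K := by gcongr
        _ = ((3 / 4) ^ (n + 1) * M + 4 * β) * K := by rw [hC]; ring
  have hlimit : Tendsto (fun n : ℕ => ((3 / 4 : ℝ) ^ n * M + 4 * β) * K) atTop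
      (𝓝 ((0 * M + 4 * β) * K)) :=
    (((tendsto_pow_atTop_nhds_zero_of_lt_one (by norm_num) (by norm_num)).mul_const M).add_const
      _).mul_const _
  rw [zero_mul, zero_add] at hlimit
  exact ge_of_tendsto' hlimit fun n => hiterate n K f hf

lemma IsRenewalStep.abs_le {b : ℕ} {D D' : C(I, ℝ) →ₗ[ℝ] ℝ} (h : IsRenewalStep b D D')
    (f : C(I, ℝ)) :
    |D' f| ≤ |D' (digitAverage b f)| + (b : ℝ)⁻¹ * |D' (pull b 0 f)|
      + (b : ℝ)⁻¹ * |D (pull b 0 f)| := by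
  rw [h f]
  refine (abs_add_le _ _).trans ?_
  rw [abs_mul, abs_inv, Nat.abs_cast, add_assoc, ← mul_add]
  gcongr
  exact (abs_sub _ _).trans_eq (add_comm _ _)

lemma abs_jump_le {b : ℕ} (k : ℕ) (f : C(I, ℝ)) : |jump b k f| ≤ 2 * b * ‖f‖ := by
  rw [jump, LinearMap.sub_apply]
  linarith [abs_sub (irwinFunctional b k f) (irwinFunctional b (k + 1) f),
    abs_irwinFunctional_le b k f, abs_irwinFunctional_le b (k + 1) f]

lemma abs_jump_le_of_lipschitzWith {b : ℕ} (hb : 1 < b) (k : ℕ) {K : ℝ≥0} {f : C(I, ℝ)}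
    (hf : LipschitzWith K f) : |jump b k f| ≤ (4 / (b : ℝ) ^ 2) ^ k * b * K := by
  have hb0 : 0 < b := zero_lt_one.trans hb
  have hb' : (b : ℝ) ≠ 0 := by positivity
  induction k generalizing K f with
  | zero =>
    have hjump : jump b 0 f = -irwinFunctional b 1 (f - f 0 • 1) := by
      rw [map_sub, map_smul, irwinFunctional_one hb0, jump, LinearMap.sub_apply,
        irwinFunctional_zero_apply, smul_eq_mul]
      ring
    rw [hjump, abs_neg, pow_zero, one_mul]
    refine (abs_irwinFunctional_le b 1 _).trans ?_
    gcongr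
    exact norm_sub_smul_one_le hf 0
  | succ k ih =>
    refine (abs_le_of_abs_le_digitAverage hb (β := (4 / (b : ℝ) ^ 2) ^ k * (b : ℝ)⁻¹)
      (by positivity) (by positivity) (abs_jump_le (k + 1)) (jump_one hb0 (k + 1))
      (fun K f hf => ?_) hf).trans_eq (by rw [pow_succ (_ / _)]; field_simp)
    refine ((isRenewalStep_jump hb0 k).abs_le f).trans (add_le_add_right ?_ _)
    have hS := ih (lipschitzWith_pull hf b 0)
    push_cast at hS
    calc (b : ℝ)⁻¹ * |jump b k (pull b 0 f)|
        ≤ (b : ℝ)⁻¹ * ((4 / (b : ℝ) ^ 2) ^ k * b * (K * (b : ℝ)⁻¹)) := by gcongr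
      _ = (4 / (b : ℝ) ^ 2) ^ k * (b : ℝ)⁻¹ * K := by field_simp

-- The hypothesis on `pull b 0 f` says that `f` is flat at `0`; it gains a factor `1 / b`.
lemma abs_jump_succ_le_of_lipschitzWith_pull {b : ℕ} (hb : 1 < b) (k : ℕ) {K : ℝ≥0}
    {f : C(I, ℝ)} (hf : LipschitzWith K f)
    (hpull : LipschitzWith (K * ((b : ℝ≥0) ^ 2)⁻¹) (pull b 0 f)) :
    |jump b (k + 1) f| ≤ 2 * (4 / (b : ℝ) ^ 2) ^ (k + 1) * K := by
  have hb0 : 0 < b := zero_lt_one.trans hb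
  have : (0 : ℝ) < b := by positivity
  have hA := abs_jump_le_of_lipschitzWith hb (k + 1) (lipschitzWith_digitAverage hf b)
  have hS := abs_jump_le_of_lipschitzWith hb k hpull
  have hS' := abs_jump_le_of_lipschitzWith hb (k + 1) hpull
  push_cast at hA hS hS'
  have hsq : (4 : ℝ) / (b : ℝ) ^ 2 ≤ 1 := by
    rw [div_le_one (by positivity)]
    exact_mod_cast Nat.pow_le_pow_left hb 2
  set q : ℝ := 4 / (b : ℝ) ^ 2 with hq
  calc |jump b (k + 1) f|
      ≤ q ^ (k + 1) * b * (K * (b : ℝ)⁻¹)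
        + (b : ℝ)⁻¹ * (q ^ (k + 1) * b * (K * ((b : ℝ) ^ 2)⁻¹))
        + (b : ℝ)⁻¹ * (q ^ k * b * (K * ((b : ℝ) ^ 2)⁻¹)) :=
        ((isRenewalStep_jump hb0 k).abs_le f).trans (by gcongr)
    _ = (1 + q / 4 + 1 / 4) * (q ^ (k + 1) * K) := by
        rw [pow_succ q k, hq]
        field_simp
    _ ≤ 2 * (q ^ (k + 1) * K) := by gcongr; linarith
    _ = 2 * q ^ (k + 1) * K := by ring

lemma lipschitzWith_of_abs_sub_le_pow {C : ℝ≥0} {p : ℕ} {f : C(I, ℝ)}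
    (hf : ∀ x y : I, |f x - f y| ≤ C * |(x : ℝ) ^ p - (y : ℝ) ^ p|) :
    LipschitzWith (C * p) f := by
  refine LipschitzWith.of_dist_le_mul fun x y => ?_
  rw [Real.dist_eq, Subtype.dist_eq, Real.dist_eq, NNReal.coe_mul, NNReal.coe_natCast, mul_assoc]
  refine (hf x y).trans (mul_le_mul_of_nonneg_left ?_ C.2)
  have hmax : max |(x : ℝ)| |(y : ℝ)| ≤ 1 :=
    max_le (abs_le.2 ⟨by linarith [x.2.1], x.2.2⟩) (abs_le.2 ⟨by linarith [y.2.1], y.2.2⟩)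
  calc |(x : ℝ) ^ p - (y : ℝ) ^ p|
      ≤ |(x : ℝ) - y| * p * max |(x : ℝ)| |(y : ℝ)| ^ (p - 1) := abs_pow_sub_pow_le _ _ _
    _ ≤ |(x : ℝ) - y| * p * 1 := by
        gcongr
        exact pow_le_one₀ (by positivity) hmax
    _ = p * |(x : ℝ) - y| := by ring

lemma abs_pull_zero_sub_le_pow {b : ℕ} (hb : 0 < b) {C : ℝ≥0} {p : ℕ} {f : C(I, ℝ)}
    (hf : ∀ x y : I, |f x - f y| ≤ C * |(x : ℝ) ^ p - (y : ℝ) ^ p|) (x y : I) :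
    |pull b 0 f x - pull b 0 f y| ≤
      (C * ((b : ℝ≥0) ^ p)⁻¹ : ℝ≥0) * |(x : ℝ) ^ p - (y : ℝ) ^ p| := by
  have h := hf (prependDigit b 0 x) (prependDigit b 0 y)
  rw [coe_prependDigit hb, coe_prependDigit hb, Nat.cast_zero, zero_add, zero_add, div_pow,
    div_pow, div_sub_div_same, abs_div, abs_pow, Nat.abs_cast] at h
  refine h.trans_eq ?_
  push_cast
  ring

lemma abs_jump_succ_le_of_abs_sub_le_pow {b : ℕ} (hb : 1 < b) (k : ℕ) {C : ℝ≥0} {p : ℕ}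
    (hp : 2 ≤ p) {f : C(I, ℝ)}
    (hf : ∀ x y : I, |f x - f y| ≤ C * |(x : ℝ) ^ p - (y : ℝ) ^ p|) :
    |jump b (k + 1) f| ≤ 2 * (4 / (b : ℝ) ^ 2) ^ (k + 1) * (C * p) := by
  refine abs_jump_succ_le_of_lipschitzWith_pull hb k (lipschitzWith_of_abs_sub_le_pow hf)
    ((lipschitzWith_of_abs_sub_le_pow
      (abs_pull_zero_sub_le_pow (zero_lt_one.trans hb) hf)).weaken ?_)
  have hb1 : (1 : ℝ≥0) ≤ b := by exact_mod_cast hb.le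
  rw [mul_right_comm]
  gcongr

/-! ### Moments -/

/-- The coordinate function on `[0, 1]`. -/
def coord : C(I, ℝ) where
  toFun y := y

lemma pull_coord_pow {b c : ℕ} (hc : c < b) (i : ℕ) :
    pull b c (coord ^ i) = ((b : ℝ) ^ i)⁻¹ •
      ∑ j ∈ Finset.range (i + 1), ((c : ℝ) ^ (i - j) * i.choose j) • coord ^ j := by
  ext y
  simp only [coord, pull_apply, ContinuousMap.pow_apply, ContinuousMap.coe_mk, coe_prependDigit hc,
    ContinuousMap.smul_apply, ContinuousMap.sum_apply, smul_eq_mul]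
  rw [div_pow, add_comm, add_pow, div_eq_inv_mul]
  refine congrArg _ (Finset.sum_congr rfl fun j _ => ?_)
  ring

lemma pull_zero_coord_pow {b : ℕ} (hb : 0 < b) (i : ℕ) :
    pull b 0 (coord ^ i) = ((b : ℝ) ^ i)⁻¹ • coord ^ i := by
  ext y
  simp [coord, coe_prependDigit hb, div_eq_inv_mul, mul_pow]

lemma IsRenewalStep.apply_coord_pow {b : ℕ} (hb : 0 < b) {D D' : C(I, ℝ) →ₗ[ℝ] ℝ}
    (h : IsRenewalStep b D D') (i : ℕ) :
    (b : ℝ) ^ (i + 1) * D' (coord ^ i) =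
      ∑ j ∈ Finset.range (i + 1),
        (∑ c ∈ Finset.range b, (c : ℝ) ^ (i - j)) * i.choose j * D' (coord ^ j)
      + D (coord ^ i) - D' (coord ^ i) := by
  have hb' : (b : ℝ) ≠ 0 := by positivity
  have haverage : (b : ℝ) ^ (i + 1) * D' (digitAverage b (coord ^ i)) =
      ∑ j ∈ Finset.range (i + 1),
        (∑ c ∈ Finset.range b, (c : ℝ) ^ (i - j)) * i.choose j * D' (coord ^ j) := by
    rw [digitAverage_apply,
      Finset.sum_congr rfl fun c hc => pull_coord_pow (Finset.mem_range.1 hc) i]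
    simp only [map_smul, map_sum, smul_eq_mul, ← Finset.mul_sum, Finset.sum_mul]
    rw [Finset.sum_comm, pow_succ]
    field_simp
  have hzero : (b : ℝ) ^ (i + 1) *
      ((b : ℝ)⁻¹ * (D (pull b 0 (coord ^ i)) - D' (pull b 0 (coord ^ i)))) =
        D (coord ^ i) - D' (coord ^ i) := by
    rw [pull_zero_coord_pow hb, map_smul, map_smul, smul_eq_mul, smul_eq_mul, pow_succ]
    field_simp
  linear_combination (b : ℝ) ^ (i + 1) * h (coord ^ i) + haverage + hzero

lemma sum_range_cast (b : ℕ) : ∑ c ∈ Finset.range b, (c : ℝ) = b * (b - 1) / 2 := by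
  induction b with
  | zero => simp
  | succ b ih => rw [Finset.sum_range_succ, ih]; push_cast; ring

lemma sum_range_cast_sq (b : ℕ) :
    ∑ c ∈ Finset.range b, (c : ℝ) ^ 2 = b * (b - 1) * (2 * b - 1) / 6 := by
  induction b with
  | zero => simp
  | succ b ih => rw [Finset.sum_range_succ, ih]; push_cast; ring

lemma IsRenewalStep.apply_coord {b : ℕ} (hb : 0 < b) {D D' : C(I, ℝ) →ₗ[ℝ] ℝ}
    (h : IsRenewalStep b D D') :
    ((b : ℝ) ^ 2 - b + 1) * D' coord = b * (b - 1) / 2 * D' 1 + D coord := by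
  have h1 : (b : ℝ) ^ 2 * D' coord =
      b * (b - 1) / 2 * D' 1 + b * D' coord + D coord - D' coord := by
    simpa [Finset.sum_range_succ, sum_range_cast] using h.apply_coord_pow hb 1
  linear_combination h1

/-- The first moment of `jump b k` is `-b⁻¹ ^ (2 * k - 1) / 2` times this factor with
`n = k + 1` and `x = b⁻¹`. -/
noncomputable def firstMomentFactor (n : ℕ) (x : ℝ) : ℝ := (1 - x) / (1 - x + x ^ 2) ^ n

lemma jump_coord {b : ℕ} (hb : 0 < b) (k : ℕ) :
    (b : ℝ)⁻¹ * jump b k coord =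
      -(1 / 2) * (b : ℝ)⁻¹ ^ (2 * k) * firstMomentFactor (k + 1) (b : ℝ)⁻¹ := by
  have hb' : (b : ℝ) ≠ 0 := by positivity
  have hq : (b : ℝ) ^ 2 - b + 1 ≠ 0 := by nlinarith [sq_nonneg ((b : ℝ) - 1)]
  have hfactor : 1 - (b : ℝ)⁻¹ + (b : ℝ)⁻¹ ^ 2 = ((b : ℝ) ^ 2 - b + 1) * (b : ℝ)⁻¹ ^ 2 := by
    field_simp
  set Q : ℝ := (b : ℝ) ^ 2 - b + 1
  simp only [firstMomentFactor, hfactor]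
  induction k with
  | zero =>
    have hzero : irwinFunctional b 0 coord = 0 := by simp [irwinFunctional_zero_apply, coord]
    have hstep := (isRenewalStep_irwinFunctional hb 0).apply_coord hb
    rw [irwinFunctional_one hb, hzero, add_zero] at hstep
    rw [zero_add, pow_one, mul_zero, pow_zero, jump, LinearMap.sub_apply, hzero]
    field_simp
    linear_combination -2 * hstep
  | succ k ih =>
    have hstep := (isRenewalStep_jump hb k).apply_coord hb
    rw [jump_one hb, mul_zero, zero_add] at hstep
    have hratio : jump b (k + 1) coord = jump b k coord / Q := by
      rw [← hstep, mul_div_cancel_left₀ _ hq]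
    rw [hratio, ← mul_div_assoc, ih, pow_succ _ (k + 1), mul_add_one,
      pow_add _ (2 * k)]
    field_simp

lemma jump_succ_coord_sq {b : ℕ} (hb : 0 < b) (k : ℕ) :
    jump b (k + 1) (coord ^ 2) =
      (b : ℝ)⁻¹ ^ 2 * (1 - (b : ℝ)⁻¹) * jump b (k + 1) (coord ^ 2)
        + (1 - (b : ℝ)⁻¹) * ((b : ℝ)⁻¹ * jump b (k + 1) coord)
        + (b : ℝ)⁻¹ ^ 3 * jump b k (coord ^ 2) := by
  have hb' : (b : ℝ) ≠ 0 := by positivity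
  have hstep : (b : ℝ) ^ 3 * jump b (k + 1) (coord ^ 2) =
      b * (b - 1) * jump b (k + 1) coord + b * jump b (k + 1) (coord ^ 2)
        + jump b k (coord ^ 2) - jump b (k + 1) (coord ^ 2) := by
    simpa [Finset.sum_range_succ, sum_range_cast, jump_one hb] using
      (isRenewalStep_jump hb k).apply_coord_pow hb 2
  field_simp
  linear_combination hstep

lemma jump_succ_coord_cube {b : ℕ} (hb : 0 < b) (k : ℕ) :
    jump b (k + 1) (coord ^ 3) =
      (1 - (b : ℝ)⁻¹) * (2 - (b : ℝ)⁻¹) / 2 * ((b : ℝ)⁻¹ * jump b (k + 1) coord)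
        + (b : ℝ)⁻¹ ^ 2 * (3 / 2 * (1 - (b : ℝ)⁻¹)) * jump b (k + 1) (coord ^ 2)
        + (b : ℝ)⁻¹ ^ 3 * (1 - (b : ℝ)⁻¹) * jump b (k + 1) (coord ^ 3)
        + (b : ℝ)⁻¹ ^ 4 * jump b k (coord ^ 3) := by
  have hb' : (b : ℝ) ≠ 0 := by positivity
  have hstep : (b : ℝ) ^ 4 * jump b (k + 1) (coord ^ 3) =
      b * (b - 1) * (2 * b - 1) / 6 * 3 * jump b (k + 1) coord
        + b * (b - 1) / 2 * 3 * jump b (k + 1) (coord ^ 2) + b * jump b (k + 1) (coord ^ 3)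
        + jump b k (coord ^ 3) - jump b (k + 1) (coord ^ 3) := by
    simpa [Finset.sum_range_succ, sum_range_cast, sum_range_cast_sq, jump_one hb] using
      (isRenewalStep_jump hb k).apply_coord_pow hb 3
  field_simp
  linear_combination 2 * hstep

lemma isBigO_firstMomentFactor_sub (n : ℕ) :
    (fun x => firstMomentFactor n x - (1 + (n - 1) * x + n * (n - 3) / 2 * x ^ 2
      + n * ((n : ℝ) ^ 2 - 6 * n - 1) / 6 * x ^ 3)) =O[𝓝 0] fun x : ℝ => x ^ 4 := by
  have hq : Tendsto (fun x : ℝ => (1 - x + x ^ 2)⁻¹) (𝓝 0) (𝓝 1) := by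
    have : ContinuousAt (fun x : ℝ => (1 - x + x ^ 2)⁻¹) 0 :=
      ContinuousAt.inv₀ (by fun_prop) (by norm_num)
    simpa [ContinuousAt] using this
  induction n with
  | zero =>
    refine (isBigO_zero _ _).congr_left fun x => ?_
    rw [firstMomentFactor]
    push_cast
    ring
  | succ n ih =>
    have hdefect : (fun x : ℝ => (n * (n + 1) * (n - 7) / 6
        - (n + 1) * ((n : ℝ) ^ 2 - 4 * n - 6) / 6 * x) * x ^ 4) =O[𝓝 0] fun x : ℝ => x ^ 4 := by
      have hcont : ContinuousAt (fun x : ℝ => n * (n + 1) * (n - 7) / 6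
          - (n + 1) * ((n : ℝ) ^ 2 - 4 * n - 6) / 6 * x) 0 := by fun_prop
      simpa only [one_mul] using (hcont.isBigO_one ℝ).mul (isBigO_refl (fun x : ℝ => x ^ 4) (𝓝 0))
    refine ((hq.isBigO_one ℝ).mul (ih.add hdefect)).congr (fun x => ?_) fun x => one_mul _
    have hx : 1 - x + x ^ 2 ≠ 0 := by nlinarith [sq_nonneg (x - 1), sq_nonneg x]
    simp only [firstMomentFactor, pow_succ _ n]
    push_cast
    field_simp
    ring

lemma isBigO_inv_natCast_pow_mul {c : ℝ → ℝ} (hc : ContinuousAt c 0) {m : ℕ} {u : ℕ → ℝ}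
    (hu : u =O[atTop] fun b : ℕ => (b : ℝ)⁻¹ ^ m) {j n : ℕ} (hn : n ≤ j + m) :
    (fun b : ℕ => (b : ℝ)⁻¹ ^ j * c (b : ℝ)⁻¹ * u b) =O[atTop] fun b : ℕ => (b : ℝ)⁻¹ ^ n := by
  have hinv : Tendsto (fun b : ℕ => (b : ℝ)⁻¹) atTop (𝓝 0) := tendsto_inv_atTop_nhds_zero_nat
  have hc' : (fun b : ℕ => c (b : ℝ)⁻¹) =O[atTop] fun _ => (1 : ℝ) :=
    (hc.tendsto.comp hinv).isBigO_one ℝ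
  have hpow : (fun b : ℕ => (b : ℝ)⁻¹ ^ (j + m)) =O[atTop] fun b : ℕ => (b : ℝ)⁻¹ ^ n :=
    isBigO_of_le _ fun b => by
      rw [norm_pow, norm_pow]
      exact pow_le_pow_of_le_one (norm_nonneg _) (by simpa using b.cast_inv_le_one) hn
  refine (((isBigO_refl _ _).mul hc').mul hu).trans (hpow.congr_left fun b => ?_)
  rw [mul_one, pow_add]

lemma isBigO_inv_natCast_pow {c : ℝ → ℝ} (hc : ContinuousAt c 0) (n : ℕ) :
    (fun b : ℕ => (b : ℝ)⁻¹ ^ n * c (b : ℝ)⁻¹) =O[atTop] fun b : ℕ => (b : ℝ)⁻¹ ^ n := by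
  simpa using isBigO_inv_natCast_pow_mul hc (m := 0) (u := fun _ => 1)
    (by simpa using isBigO_refl (fun _ : ℕ => (1 : ℝ)) atTop) le_rfl

lemma isBigO_firstMomentFactor_succ_sub (k : ℕ) :
    (fun b : ℕ => firstMomentFactor (k + 1) (b : ℝ)⁻¹ - (1 + k * (b : ℝ)⁻¹
      + ((k : ℝ) ^ 2 - k - 2) / 2 * (b : ℝ)⁻¹ ^ 2
      + ((k : ℝ) ^ 3 - 3 * (k : ℝ) ^ 2 - 10 * k - 6) / 6 * (b : ℝ)⁻¹ ^ 3)) =O[atTop]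
        fun b : ℕ => (b : ℝ)⁻¹ ^ 4 := by
  refine ((isBigO_firstMomentFactor_sub (k + 1)).comp_tendsto
    tendsto_inv_atTop_nhds_zero_nat).congr_left fun b => ?_
  simp only [Function.comp_apply]
  push_cast
  ring

lemma isBigO_firstMomentFactor_succ_sub_linear (k : ℕ) :
    (fun b : ℕ => firstMomentFactor (k + 1) (b : ℝ)⁻¹ - (1 + k * (b : ℝ)⁻¹)) =O[atTop]
      fun b : ℕ => (b : ℝ)⁻¹ ^ 2 := by
  have hjet := isBigO_inv_natCast_pow_mul (j := 0) (n := 2) (c := fun _ => 1) (by fun_prop)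
    (isBigO_firstMomentFactor_succ_sub k) (by omega)
  have hpoly := isBigO_inv_natCast_pow (c := fun x => ((k : ℝ) ^ 2 - k - 2) / 2
    + ((k : ℝ) ^ 3 - 3 * (k : ℝ) ^ 2 - 10 * k - 6) / 6 * x) (by fun_prop) 2
  refine (hjet.add hpoly).congr_left fun b => ?_
  ring

/-! ### Expansion in the base -/

lemma isBigO_jump_succ_of_abs_sub_le_pow {C : ℝ≥0} {p m k : ℕ} (hp : 2 ≤ p) {f : ℕ → C(I, ℝ)}
    (hf : ∀ b : ℕ, 0 < b → ∀ x y : I,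
      |f b x - f b y| ≤ (C * ((b : ℝ≥0) ^ m)⁻¹ : ℝ≥0) * |(x : ℝ) ^ p - (y : ℝ) ^ p|) :
    (fun b => jump b (k + 1) (f b)) =O[atTop] fun b : ℕ => (b : ℝ)⁻¹ ^ (2 * k + 2 + m) := by
  refine IsBigO.of_bound (2 * 4 ^ (k + 1) * (C * p)) ?_
  filter_upwards [eventually_gt_atTop 1] with b hb
  have : (b : ℝ) ≠ 0 := by positivity
  rw [Real.norm_eq_abs, norm_pow, norm_inv, Real.norm_natCast]
  refine (abs_jump_succ_le_of_abs_sub_le_pow hb k hp (hf b (zero_lt_one.trans hb))).trans_eq ?_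
  push_cast
  rw [div_pow, ← pow_mul, mul_add_one, pow_add _ _ m, inv_pow, inv_pow]
  field_simp

lemma isBigO_jump_succ_coord_pow {p : ℕ} (hp : 2 ≤ p) (k : ℕ) :
    (fun b => jump b (k + 1) (coord ^ p)) =O[atTop] fun b : ℕ => (b : ℝ)⁻¹ ^ (2 * k + 2) :=
  isBigO_jump_succ_of_abs_sub_le_pow (C := 1) (m := 0) hp fun b _ x y => by simp [coord]

lemma isBigO_jump_succ_harmonicRemainderMap {N : ℕ} (hN : 1 ≤ N) (k : ℕ) :
    (fun b => jump b (k + 1) (pull b 0 (harmonicRemainderMap N))) =O[atTop]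
      fun b : ℕ => (b : ℝ)⁻¹ ^ (2 * k + 2 + (N + 1)) :=
  isBigO_jump_succ_of_abs_sub_le_pow (C := ⟨zetaR (N + 2), zetaR_nonneg _⟩)
    (by omega : 2 ≤ N + 1) fun _ hb => abs_pull_zero_sub_le_pow hb fun x y =>
      abs_harmonicRemainder_sub_le N x.2.1 y.2.1

lemma isBigO_jump_coord_sq_add (k : ℕ) :
    (fun b : ℕ => jump b (k + 2) (coord ^ 2) + 1 / 2 * (b : ℝ)⁻¹ ^ (2 * k + 4)) =O[atTop]
      fun b : ℕ => (b : ℝ)⁻¹ ^ (2 * k + 5) := by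
  have hself := isBigO_inv_natCast_pow_mul (j := 2) (n := 2 * k + 5) (c := fun x => 1 - x)
    (by fun_prop) (isBigO_jump_succ_coord_pow le_rfl (k + 1)) (by omega)
  have hprev := isBigO_inv_natCast_pow_mul (j := 3) (n := 2 * k + 5) (c := fun _ => 1)
    (by fun_prop) (isBigO_jump_succ_coord_pow le_rfl k) (by omega)
  have hfactor := isBigO_inv_natCast_pow_mul (j := 2 * k + 4) (n := 2 * k + 5)
    (c := fun x => -(1 / 2) * (1 - x)) (by fun_prop)
    (isBigO_firstMomentFactor_succ_sub_linear (k + 2)) (by omega)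
  have hpoly := isBigO_inv_natCast_pow (c := fun x => -(1 / 2) * (k + 1 - (k + 2) * x))
    (by fun_prop) (2 * k + 5)
  refine (((hself.add hprev).add hfactor).add hpoly).congr' ?_ .rfl
  filter_upwards [eventually_gt_atTop 0] with b hb
  push_cast
  linear_combination -jump_succ_coord_sq hb (k + 1)
    - (1 - (b : ℝ)⁻¹) * jump_coord hb (k + 2)

lemma isBigO_jump_coord_sq_add_linear (k : ℕ) :
    (fun b : ℕ => jump b (k + 3) (coord ^ 2)
      + 1 / 2 * (b : ℝ)⁻¹ ^ (2 * k + 6) * (1 + (k + 3) * (b : ℝ)⁻¹)) =O[atTop]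
      fun b : ℕ => (b : ℝ)⁻¹ ^ (2 * k + 8) := by
  have hself := isBigO_inv_natCast_pow_mul (j := 2) (n := 2 * k + 8) (c := fun x => 1 - x)
    (by fun_prop) (isBigO_jump_succ_coord_pow le_rfl (k + 2)) (by omega)
  have hprev := isBigO_inv_natCast_pow_mul (j := 3) (n := 2 * k + 8) (c := fun _ => 1)
    (by fun_prop) (isBigO_jump_coord_sq_add k) (by omega)
  have hfactor := isBigO_inv_natCast_pow_mul (j := 2 * k + 6) (n := 2 * k + 8)
    (c := fun x => -(1 / 2) * (1 - x)) (by fun_prop)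
    (isBigO_firstMomentFactor_succ_sub_linear (k + 3)) (by omega)
  have hpoly := isBigO_inv_natCast_pow (c := fun _ => 1 / 2 * (k + 3)) (by fun_prop) (2 * k + 8)
  refine (((hself.add hprev).add hfactor).add hpoly).congr' ?_ .rfl
  filter_upwards [eventually_gt_atTop 0] with b hb
  push_cast
  linear_combination -jump_succ_coord_sq hb (k + 2)
    - (1 - (b : ℝ)⁻¹) * jump_coord hb (k + 3)

lemma isBigO_jump_coord_cube_add (k : ℕ) :
    (fun b : ℕ => jump b (k + 2) (coord ^ 3) + 1 / 2 * (b : ℝ)⁻¹ ^ (2 * k + 4)) =O[atTop]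
      fun b : ℕ => (b : ℝ)⁻¹ ^ (2 * k + 5) := by
  have hsq := isBigO_inv_natCast_pow_mul (j := 2) (n := 2 * k + 5)
    (c := fun x => 3 / 2 * (1 - x)) (by fun_prop)
    (isBigO_jump_succ_coord_pow le_rfl (k + 1)) (by omega)
  have hself := isBigO_inv_natCast_pow_mul (j := 3) (n := 2 * k + 5) (c := fun x => 1 - x)
    (by fun_prop) (isBigO_jump_succ_coord_pow (by norm_num : 2 ≤ 3) (k + 1)) (by omega)
  have hprev := isBigO_inv_natCast_pow_mul (j := 4) (n := 2 * k + 5) (c := fun _ => 1)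
    (by fun_prop) (isBigO_jump_succ_coord_pow (by norm_num : 2 ≤ 3) k) (by omega)
  have hfactor := isBigO_inv_natCast_pow_mul (j := 2 * k + 4) (n := 2 * k + 5)
    (c := fun x => -(1 / 4) * ((1 - x) * (2 - x))) (by fun_prop)
    (isBigO_firstMomentFactor_succ_sub_linear (k + 2)) (by omega)
  have hpoly := isBigO_inv_natCast_pow
    (c := fun x => -(1 / 4) * (2 * k + 1 - (3 * k + 5) * x + (k + 2) * x ^ 2))
    (by fun_prop) (2 * k + 5)
  refine ((((hsq.add hself).add hprev).add hfactor).add hpoly).congr' ?_ .rfl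
  filter_upwards [eventually_gt_atTop 0] with b hb
  push_cast
  linear_combination -jump_succ_coord_cube hb (k + 1)
    - (1 - (b : ℝ)⁻¹) * (2 - (b : ℝ)⁻¹) / 2 * jump_coord hb (k + 2)

lemma irwinSum_zero_eq_sum_jump {b : ℕ} (hb : 1 < b) (k N : ℕ) :
    irwinSum b 0 k = b * Real.log b - (b : ℝ)⁻¹ *
      (∑ i ∈ Finset.range N,
        (-1) ^ i * zetaR (i + 2) * (b : ℝ)⁻¹ ^ (i + 1) * jump b k (coord ^ (i + 1))
      + jump b k (pull b 0 (harmonicRemainderMap N))) := by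
  have hpull : pull b 0 (harmonicRemainderMap 0) =
      ∑ i ∈ Finset.range N,
        ((-1) ^ i * zetaR (i + 2) * (b : ℝ)⁻¹ ^ (i + 1)) • coord ^ (i + 1)
      + pull b 0 (harmonicRemainderMap N) := by
    ext y
    simp [harmonicRemainderMap, harmonicRemainder, coord,
      coe_prependDigit (zero_lt_one.trans hb), div_eq_inv_mul, mul_pow, mul_assoc]
  rw [irwinSum_zero_eq_jump hb, hpull, map_add, map_sum]
  simp only [map_smul, smul_eq_mul]

end Irwin

theorem irwin_zero_k_asymptotic (k : ℕ) (hk : 3 ≤ k) :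
    (fun b : ℕ => irwinSum b 0 k -
      ((b : ℝ) * Real.log b + zetaR 2 / (2 * (b : ℝ) ^ (2 * k + 1))
        + (k : ℝ) * zetaR 2 / (2 * (b : ℝ) ^ (2 * k + 2))
        + (((k : ℝ) ^ 2 - k - 2) * zetaR 2 - 2 * zetaR 3) / (4 * (b : ℝ) ^ (2 * k + 3))
        + (((k : ℝ) ^ 3 - 3 * (k : ℝ) ^ 2 - 10 * k - 6) * zetaR 2 - 6 * k * zetaR 3
            + 6 * zetaR 4) / (12 * (b : ℝ) ^ (2 * k + 4))))
      =O[atTop] fun b : ℕ => ((b : ℝ) ^ (2 * k + 5))⁻¹ := by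
  obtain ⟨i, rfl⟩ := Nat.exists_eq_add_of_le' hk
  have hfirst := Irwin.isBigO_inv_natCast_pow_mul (j := 2 * i + 7) (n := 2 * i + 11)
    (c := fun _ => 1 / 2 * zetaR 2) (by fun_prop)
    (Irwin.isBigO_firstMomentFactor_succ_sub (i + 3)) (by omega)
  have hsecond := Irwin.isBigO_inv_natCast_pow_mul (j := 3) (n := 2 * i + 11)
    (c := fun _ => zetaR 3) (by fun_prop) (Irwin.isBigO_jump_coord_sq_add_linear i) (by omega)
  have hthird := Irwin.isBigO_inv_natCast_pow_mul (j := 4) (n := 2 * i + 11)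
    (c := fun _ => -zetaR 4) (by fun_prop) (Irwin.isBigO_jump_coord_cube_add (i + 1)) (by omega)
  have hremainder := Irwin.isBigO_inv_natCast_pow_mul (j := 1) (n := 2 * i + 11)
    (c := fun _ => -1) (by fun_prop)
    (Irwin.isBigO_jump_succ_harmonicRemainderMap (by norm_num : 1 ≤ 3) (i + 2)) (by omega)
  refine (((hfirst.add hsecond).add hthird).add hremainder).congr' ?_
    (.of_forall fun b => inv_pow _ _)
  filter_upwards [eventually_gt_atTop 1] with b hb
  rw [Irwin.irwinSum_zero_eq_sum_jump hb _ 3]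
  simp only [div_eq_mul_inv, mul_inv, ← inv_pow, Finset.sum_range_succ, Finset.sum_range_zero,
    zero_add, pow_one]
  push_cast
  linear_combination zetaR 2 * (b : ℝ)⁻¹ * Irwin.jump_coord (zero_lt_one.trans hb) (i + 3)
end

section
/- For every fixed integer d ≥ 1, as the integer b → ∞ (with b > d), I(b,d,0) = b·log b − b·log(1 + 1/d) + a₁/b + a₂/b² + a₃/b³ + a₄/b⁴ + a₅/b⁵ + O(b⁻⁶), where: a₁ = (d + 1/2)(ζ(2) − d⁻²); a₂ = −(d² + d + 1/3)ζ(3) + (9d² + 8d + 2)/(6d³(d+1)); a₃ = (d + 1/2)(d² + d + 1/2)ζ(4) − (d + 1/2)ζ(2) − (d + 1/2)(2d⁴ + 6d³ + 6d² + 4d + 1)/(2d⁴(d+1)²); a₄ = −(d⁴ + 2d³ + 2d² + d + 1/5)ζ(5) + (2d+1)d·ζ(3) − (d + 1/2)ζ(2) + (60d⁷ + 240d⁶ + 500d⁵ + 705d⁴ + 627d³ + 331d² + 96d + 12)/(60d⁵(d+1)³); a₅ = (d + 1/2)(d² + d + 1)(d² + d + 1/3)ζ(6) − 3(d + 1/2)d²ζ(4)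 + (3d² + 3d + 5/6)ζ(3) − (d + 1/2)(9d⁶ + 38d⁵ + 56d⁴ + 44d³ + 22d² + 7d + 1)/(3d⁶(d+1)³). -/
open Filter Asymptotics

/-!
Prepending an admissible digit acts on functions as the transfer operator
`T f x = b⁻¹ ∑_{a ≠ d} f ((a + x) / b)`, and it carries the shifted harmonic sum over the integers
with `l + 1` digits to the one over `l + 2` digits. Hence `I(b, d, 0) = μ f`, where `f` is the
shifted sum over one-digit integers and `μ g = ∑_l (T^l g)(0)` satisfies `μ g = g 0 + μ (T g)`.

Here `T f` is the sum over two-digit integers: all of `[b, b²)`, except the block `[bd, b(d + 1))`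
and the numbers `b m + d`. Euler–Maclaurin expands the first two contributions in the Bernoulli
polynomials `B_k(x)`, and a geometric series expands the last one in the powers `(d + x) ^ j`.
The operator `T` multiplies `B_k` by `b⁻ᵏ`, up to the term of the omitted digit, which is a
polynomial in `d + x`; conversely `(d + x) ^ j` is a combination of Bernoulli polynomials.
The moments `μ(B_k)` and `μ((d + x) ^ j)` are therefore tied by two recursions, and each passage
through them gains powers of `1 / b`: starting from crude bounds, they give both families to the
order needed. The partial sums of `ζ(j + 1)` that appear are again expanded by Euler–Maclaurin.
-/

open Finset Set

section EulerMaclaurin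

open scoped Nat

variable {G : ℕ → ℝ → ℝ} {n : ℕ}

/-- The Euler–Maclaurin main term `∑_{k ≤ n} B_k(x) / k! * (G k v - G k u)`, where `G (k + 1)` is
meant to be the derivative of `G k`; it approximates the sum of `G 1 (m + x)` over the integers `m`
with `u ≤ m < v`. -/
noncomputable def bernoulliSum (G : ℕ → ℝ → ℝ) (n : ℕ) (u v x : ℝ) : ℝ :=
  ∑ k ∈ range (n + 1), bernoulliFun k x / k ! * (G k v - G k u)

theorem bernoulliSum_self (u x : ℝ) : bernoulliSum G n u u x = 0 := by
  simp [bernoulliSum]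

theorem bernoulliSum_add (u v w x : ℝ) :
    bernoulliSum G n u v x + bernoulliSum G n v w x = bernoulliSum G n u w x := by
  simp only [bernoulliSum, ← sum_add_distrib]
  exact sum_congr rfl fun k _ ↦ by ring

theorem hasDerivAt_bernoulliSum (G : ℕ → ℝ → ℝ) (n : ℕ) (u v x : ℝ) :
    HasDerivAt (bernoulliSum G (n + 1) u v) (bernoulliSum (fun k ↦ G (k + 1)) n u v x) x := by
  refine (HasDerivAt.fun_sum fun k _ ↦
    ((hasDerivAt_bernoulliFun k x).div_const _).mul_const (G k v - G k u)).congr_deriv ?_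
  rw [sum_range_succ']
  simp only [bernoulliSum, Nat.cast_zero, zero_mul, zero_div, add_zero, add_tsub_cancel_right]
  refine sum_congr rfl fun k _ ↦ ?_
  rw [Nat.factorial_succ]
  push_cast
  field_simp

theorem bernoulliSum_succ_one_sub_zero (G : ℕ → ℝ → ℝ) (n : ℕ) (u v : ℝ) :
    bernoulliSum G (n + 1) u v 1 - bernoulliSum G (n + 1) u v 0 = G 1 v - G 1 u := by
  simp only [bernoulliSum, ← sum_sub_distrib, ← sub_mul, ← sub_div, bernoulliFun_eval_one,
    add_sub_cancel_left]
  rw [sum_eq_single_of_mem 1 (by simp) fun k _ hk ↦ by simp [hk]]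
  simp

/-- The remainder has mean zero on the unit interval; here in the form given by Rolle's theorem. -/
theorem exists_eq_bernoulliSum {a : ℝ}
    (hG : ∀ x ∈ Icc (0 : ℝ) 1, HasDerivAt (G 0) (G 1 (a + x)) (a + x)) :
    ∃ c ∈ Icc (0 : ℝ) 1, G 1 (a + c) = bernoulliSum G n a (a + 1) c := by
  let H : ℕ → ℝ → ℝ := fun k ↦ G (k - 1)
  have hderiv : ∀ x ∈ Icc (0 : ℝ) 1,
      HasDerivAt (fun x ↦ G 0 (a + x) - bernoulliSum H (n + 1) a (a + 1) x)
        (G 1 (a + x) - bernoulliSum G n a (a + 1) x) x := fun x hx ↦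
    ((hG x hx).comp_const_add a x).sub (hasDerivAt_bernoulliSum H n a (a + 1) x)
  have hends := bernoulliSum_succ_one_sub_zero H n a (a + 1)
  obtain ⟨c, hc, h⟩ := exists_hasDerivAt_eq_zero zero_lt_one
    (fun x hx ↦ (hderiv x hx).continuousAt.continuousWithinAt)
    (by simp only [H, add_zero] at hends ⊢; linarith)
    fun x hx ↦ hderiv x (Ioo_subset_Icc_self hx)
  exact ⟨c, Ioo_subset_Icc_self hc, sub_eq_zero.1 h⟩

theorem abs_sub_bernoulliSum_le {a E : ℝ}
    (hG : ∀ k ≤ n, ∀ x ∈ Icc (0 : ℝ) 1, HasDerivAt (G k) (G (k + 1) (a + x)) (a + x))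
    (hE : ∀ x ∈ Icc (0 : ℝ) 1, ∀ y ∈ Icc (0 : ℝ) 1, |G (n + 1) (a + x) - G (n + 1) (a + y)| ≤ E) :
    ∀ x ∈ Icc (0 : ℝ) 1, |G 1 (a + x) - bernoulliSum G n a (a + 1) x| ≤ E := by
  intro x hx
  obtain ⟨c, hc, hzero⟩ := exists_eq_bernoulliSum (n := n) (hG 0 n.zero_le)
  induction n generalizing G x c with
  | zero =>
    have hconst : bernoulliSum G 0 a (a + 1) x = bernoulliSum G 0 a (a + 1) c := by
      simp [bernoulliSum]
    rw [hconst, ← hzero]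
    exact hE x hx c hc
  | succ n ih =>
    have hderiv : ∀ y ∈ Icc (0 : ℝ) 1,
        HasDerivWithinAt (fun y ↦ G 1 (a + y) - bernoulliSum G (n + 1) a (a + 1) y)
          (G 2 (a + y) - bernoulliSum (fun k ↦ G (k + 1)) n a (a + 1) y) (Icc 0 1) y := fun y hy ↦
      (((hG 1 (by lia) y hy).comp_const_add a y).sub
        (hasDerivAt_bernoulliSum G n a (a + 1) y)).hasDerivWithinAt
    have hbound : ∀ y ∈ Icc (0 : ℝ) 1,
        ‖G 2 (a + y) - bernoulliSum (fun k ↦ G (k + 1)) n a (a + 1) y‖ ≤ E := fun y hy ↦ by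
      have hG' : ∀ k ≤ n, ∀ x ∈ Icc (0 : ℝ) 1,
          HasDerivAt (G (k + 1)) (G (k + 2) (a + x)) (a + x) := fun k hk ↦ hG (k + 1) (by lia)
      obtain ⟨c', hc', hzero'⟩ :=
        exists_eq_bernoulliSum (G := fun k ↦ G (k + 1)) (n := n) (hG' 0 n.zero_le)
      exact ih hG' hE y hy c' hc' hzero'
    have hE0 : 0 ≤ E := (abs_nonneg _).trans (hE x hx x hx)
    have hxc : |x - c| ≤ 1 := abs_sub_le_iff.2 ⟨by linarith [hx.2, hc.1], by linarith [hx.1, hc.2]⟩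
    have hmvt := (convex_Icc 0 1).norm_image_sub_le_of_norm_hasDerivWithin_le hderiv hbound hc hx
    simp only [hzero, sub_self, sub_zero, Real.norm_eq_abs] at hmvt
    exact hmvt.trans (mul_le_of_le_one_right hE0 hxc)

/-- Euler–Maclaurin summation, with the oscillation of the last derivative over each unit interval
controlled by a telescoping sequence. -/
theorem abs_sum_Ico_sub_bernoulliSum_le {r : ℕ → ℝ} {N M : ℕ} (hNM : N ≤ M)
    (hG : ∀ k ≤ n, ∀ y ≥ (N : ℝ), HasDerivAt (G k) (G (k + 1) y) y)
    (hr : ∀ m ≥ N, ∀ x ∈ Icc (0 : ℝ) 1, ∀ y ∈ Icc (0 : ℝ) 1,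
      |G (n + 1) (m + x) - G (n + 1) (m + y)| ≤ r m - r (m + 1)) :
    ∀ x ∈ Icc (0 : ℝ) 1,
      |∑ m ∈ Finset.Ico N M, G 1 (m + x) - bernoulliSum G n N M x| ≤ r N - r M := by
  intro x hx
  induction M, hNM using Nat.le_induction with
  | base => simp [bernoulliSum_self]
  | succ M hNM ih =>
    have hunit := abs_sub_bernoulliSum_le (a := M)
      (fun k hk y hy ↦ hG k hk _ (by linarith [hy.1, (Nat.cast_le (α := ℝ)).2 hNM]))
      (hr M hNM) x hx
    rw [sum_Ico_succ_top hNM, Nat.cast_add_one, ← bernoulliSum_add N M, add_sub_add_comm]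
    linarith [abs_add_le (∑ m ∈ Finset.Ico N M, G 1 (m + x) - bernoulliSum G n N M x)
      (G 1 (M + x) - bernoulliSum G n M (M + 1) x)]

end EulerMaclaurin

section HarmonicSums

open scoped Nat

/-- The `k`-th derivative of the logarithm on the positive axis. -/
noncomputable def logIterDeriv : ℕ → ℝ → ℝ
  | 0, y => Real.log y
  | k + 1, y => (-1) ^ k * k ! * (y ^ (k + 1))⁻¹

/-- The partial sum `∑_{1 ≤ m < b} m^{-s}` of the zeta series. -/
noncomputable def zetaPartialSum (s b : ℕ) : ℝ := ∑ m ∈ Finset.Ico 1 b, ((m : ℝ) ^ s)⁻¹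

theorem hasDerivAt_logIterDeriv (k : ℕ) {y : ℝ} (hy : y ≠ 0) :
    HasDerivAt (logIterDeriv k) (logIterDeriv (k + 1) y) y := by
  cases k with
  | zero => exact (Real.hasDerivAt_log hy).congr_deriv (by simp [logIterDeriv])
  | succ k =>
    refine (((hasDerivAt_pow (k + 1) y).inv (pow_ne_zero _ hy)).const_mul
      ((-1) ^ k * (k ! : ℝ))).congr_deriv ?_
    rw [logIterDeriv, Nat.factorial_succ]
    push_cast
    field_simp
    ring

theorem abs_logIterDeriv_sub_le (n : ℕ) {m : ℕ} (hm : 1 ≤ m) {x y : ℝ} (hx : x ∈ Icc (0 : ℝ) 1)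
    (hy : y ∈ Icc (0 : ℝ) 1) :
    |logIterDeriv (n + 1) (m + x) - logIterDeriv (n + 1) (m + y)| ≤
      n ! * ((m : ℝ) ^ (n + 1))⁻¹ - n ! * (((m + 1 : ℕ) : ℝ) ^ (n + 1))⁻¹ := by
  have : (0 : ℝ) < m := by exact_mod_cast hm
  have mem : ∀ z ∈ Icc (0 : ℝ) 1,
      ((m + z) ^ (n + 1))⁻¹ ∈ Icc ((((m + 1 : ℕ) : ℝ) ^ (n + 1))⁻¹) (((m : ℝ) ^ (n + 1))⁻¹) := by
    intro z hz
    have : 0 ≤ z := hz.1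
    constructor
    · gcongr
      push_cast
      linarith [hz.2]
    · gcongr
      linarith
  simp only [logIterDeriv, ← mul_sub, abs_mul, abs_pow, abs_neg, abs_one, one_pow, one_mul,
    Nat.abs_cast]
  gcongr
  exact abs_sub_le_of_le_of_le (mem x hx).1 (mem x hx).2 (mem y hy).1 (mem y hy).2

theorem abs_sum_logIterDeriv_sub_bernoulliSum_le (j n : ℕ) {N M : ℕ} (hN : 1 ≤ N) (hNM : N ≤ M)
    {x : ℝ} (hx : x ∈ Icc (0 : ℝ) 1) :
    |∑ m ∈ Finset.Ico N M, logIterDeriv (j + 1) (m + x) -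
      bernoulliSum (fun k ↦ logIterDeriv (j + k)) n N M x| ≤
      (j + n)! * ((N : ℝ) ^ (j + n + 1))⁻¹ := by
  have hN0 : (1 : ℝ) ≤ N := by exact_mod_cast hN
  refine (abs_sum_Ico_sub_bernoulliSum_le (G := fun k ↦ logIterDeriv (j + k))
    (r := fun m ↦ (j + n)! * ((m : ℝ) ^ (j + n + 1))⁻¹) hNM
    (fun k _ y hy ↦ hasDerivAt_logIterDeriv (j + k) (by linarith))
    (fun m hm x hx y hy ↦ abs_logIterDeriv_sub_le (j + n) (hN.trans hm) hx hy) x hx).trans ?_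
  exact sub_le_self _ (by positivity)

theorem tendsto_logIterDeriv_succ_atTop (k : ℕ) :
    Tendsto (fun M : ℕ ↦ logIterDeriv (k + 1) M) atTop (nhds 0) := by
  have hinv : Tendsto (fun M : ℕ ↦ ((M : ℝ) ^ (k + 1))⁻¹) atTop (nhds 0) :=
    ((tendsto_pow_atTop k.succ_ne_zero).comp tendsto_natCast_atTop_atTop).inv_tendsto_atTop
  simpa [logIterDeriv] using hinv.const_mul ((-1) ^ k * (k ! : ℝ))

theorem summable_one_div_add_one_pow {s : ℕ} (hs : 2 ≤ s) :
    Summable fun n : ℕ ↦ 1 / ((n : ℝ) + 1) ^ s := by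
  simpa using (summable_nat_add_iff 1).2 (Real.summable_one_div_nat_pow.2 hs)

theorem zetaPartialSum_add_one (s n : ℕ) :
    zetaPartialSum s (n + 1) = ∑ k ∈ range n, 1 / ((k : ℝ) + 1) ^ s := by
  simp [zetaPartialSum, sum_Ico_eq_sum_range, add_comm]

theorem tendsto_zetaPartialSum {s : ℕ} (hs : 2 ≤ s) :
    Tendsto (zetaPartialSum s) atTop (nhds (zetaR s)) := by
  rw [← tendsto_add_atTop_iff_nat 1]
  simpa only [zetaPartialSum_add_one, zetaR] using
    (summable_one_div_add_one_pow hs).hasSum.tendsto_sum_nat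

theorem zetaPartialSum_le {s : ℕ} (hs : 2 ≤ s) (b : ℕ) : zetaPartialSum s b ≤ zetaR s := by
  refine Monotone.ge_of_tendsto (fun m n h ↦ ?_) (tendsto_zetaPartialSum hs) b
  exact sum_le_sum_of_subset_of_nonneg (Ico_subset_Ico_right h) fun i _ _ ↦ by positivity

/-- Euler–Maclaurin for the tail `∑_{m ≥ b} m^{-(j + 1)}`, after multiplication by the constant
relating `m^{-(j + 1)}` to a derivative of the logarithm. -/
theorem abs_zetaR_sub_zetaPartialSum_add_sum_le {j b : ℕ} (hj : 1 ≤ j) (n : ℕ)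
    (hb : 1 ≤ b) :
    |(-1) ^ j * j ! * (zetaR (j + 1) - zetaPartialSum (j + 1) b) +
      ∑ k ∈ range (n + 1), (bernoulli k : ℝ) / k ! * logIterDeriv (j + k) b| ≤
      (j + n)! * ((b : ℝ) ^ (j + n + 1))⁻¹ := by
  have hsum : Tendsto (fun M ↦ ∑ m ∈ Finset.Ico b M, logIterDeriv (j + 1) (m + 0)) atTop
      (nhds ((-1) ^ j * j ! * (zetaR (j + 1) - zetaPartialSum (j + 1) b))) := by
    refine (((tendsto_zetaPartialSum (by lia)).sub_const _).const_mul _).congr' ?_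
    filter_upwards [eventually_ge_atTop b] with M hM
    simp only [zetaPartialSum, ← sum_Ico_consecutive _ hb hM, add_sub_cancel_left, mul_sum,
      logIterDeriv, add_zero]
  have hmain : Tendsto (fun M : ℕ ↦ bernoulliSum (fun k ↦ logIterDeriv (j + k)) n b M 0) atTop
      (nhds (∑ k ∈ range (n + 1), (bernoulli k : ℝ) / k ! * (0 - logIterDeriv (j + k) b))) := by
    simp only [bernoulliSum, bernoulliFun_eval_zero]
    refine tendsto_finsetSum _ fun k _ ↦ Tendsto.const_mul _ (Tendsto.sub_const ?_ _)
    obtain ⟨i, hi⟩ : ∃ i, j + k = i + 1 := ⟨j + k - 1, by lia⟩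
    simpa only [hi] using tendsto_logIterDeriv_succ_atTop i
  have hlim := (hsum.sub hmain).abs
  simp only [zero_sub, mul_neg, sum_neg_distrib, sub_neg_eq_add] at hlim
  refine le_of_tendsto hlim ?_
  filter_upwards [eventually_ge_atTop b] with M hM
  exact abs_sum_logIterDeriv_sub_bernoulliSum_le j n hb hM (by simp)

end HarmonicSums

section HasExpansion

open Polynomial

variable {m n : ℕ} {f g : ℕ → ℝ} {p q : ℝ[X]}

/-- `HasExpansion n f p` means `f b = p(1 / b) + O(b⁻ⁿ)` as `b → ∞`. The polynomial is determined
only modulo `X ^ n`, and `HasExpansion 0 f 0` says that `f` is bounded. -/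
def HasExpansion (n : ℕ) (f : ℕ → ℝ) (p : ℝ[X]) : Prop :=
  (fun b ↦ f b - p.eval (b : ℝ)⁻¹) =O[atTop] fun b ↦ (b : ℝ)⁻¹ ^ n

theorem isBigO_eval_inv (p : ℝ[X]) :
    (fun b : ℕ ↦ p.eval (b : ℝ)⁻¹) =O[atTop] fun _ ↦ (1 : ℝ) := by
  have hlim : Tendsto (fun b : ℕ ↦ p.eval (b : ℝ)⁻¹) atTop (nhds (p.eval 0)) :=
    (p.continuous.tendsto 0).comp tendsto_inv_atTop_nhds_zero_nat
  exact hlim.isBigO_one ℝ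

theorem isBigO_inv_pow (h : n ≤ m) :
    (fun b : ℕ ↦ (b : ℝ)⁻¹ ^ m) =O[atTop] fun b ↦ (b : ℝ)⁻¹ ^ n := by
  refine .of_bound 1 (Eventually.of_forall fun b ↦ ?_)
  rw [one_mul, norm_pow, norm_pow]
  exact pow_le_pow_of_le_one (norm_nonneg _) (by simpa using Nat.cast_inv_le_one b) h

theorem hasExpansion_eval (n : ℕ) (p : ℝ[X]) :
    HasExpansion n (fun b ↦ p.eval (b : ℝ)⁻¹) p := by
  simpa [HasExpansion] using isBigO_zero _ _

theorem hasExpansion_const (n : ℕ) (c : ℝ) : HasExpansion n (fun _ ↦ c) (C c) := by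
  simpa using hasExpansion_eval n (C c)

theorem HasExpansion.of_eventuallyEq (hg : HasExpansion n g p) (h : f =ᶠ[atTop] g) :
    HasExpansion n f p :=
  hg.congr' (h.symm.mono fun b hb ↦ by simp only [hb]) .rfl

theorem HasExpansion.mono (hf : HasExpansion m f p) (h : n ≤ m) : HasExpansion n f p :=
  hf.trans (isBigO_inv_pow h)

theorem HasExpansion.add (hf : HasExpansion n f p) (hg : HasExpansion n g q) :
    HasExpansion n (fun b ↦ f b + g b) (p + q) :=
  (IsBigO.add hf hg).congr_left fun b ↦ by rw [eval_add]; ring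

theorem HasExpansion.sub (hf : HasExpansion n f p) (hg : HasExpansion n g q) :
    HasExpansion n (fun b ↦ f b - g b) (p - q) :=
  (IsBigO.sub hf hg).congr_left fun b ↦ by rw [eval_sub]; ring

theorem HasExpansion.bounded (hf : HasExpansion n f p) : f =O[atTop] fun _ ↦ (1 : ℝ) := by
  have hrem : (fun b ↦ f b - p.eval (b : ℝ)⁻¹) =O[atTop] fun _ ↦ (1 : ℝ) := by
    simpa using hf.trans (isBigO_inv_pow n.zero_le)
  simpa using hrem.add (isBigO_eval_inv p)

theorem HasExpansion.mul (hf : HasExpansion n f p) (hg : HasExpansion n g q) :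
    HasExpansion n (fun b ↦ f b * g b) (p * q) := by
  have hleft := (IsBigO.mul hf hg.bounded).add ((isBigO_eval_inv p).mul hg |>.congr_right
    fun b ↦ mul_comm 1 _)
  refine hleft.congr (fun b ↦ ?_) fun b ↦ mul_one _
  rw [eval_mul]
  ring

theorem HasExpansion.const_mul (hf : HasExpansion n f p) (c : ℝ) :
    HasExpansion n (fun b ↦ c * f b) (C c * p) :=
  (hasExpansion_const n c).mul hf

theorem HasExpansion.inv_pow_mul (hf : HasExpansion m f p) (k : ℕ) (h : n ≤ k + m) :
    HasExpansion n (fun b ↦ (b : ℝ)⁻¹ ^ k * f b) (X ^ k * p) := by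
  refine HasExpansion.mono (m := k + m) ?_ h
  refine ((isBigO_refl (fun b : ℕ ↦ (b : ℝ)⁻¹ ^ k) atTop).mul hf).congr (fun b ↦ ?_) fun b ↦ ?_
  · simp [mul_sub]
  · rw [pow_add]

theorem HasExpansion.sum {ι : Type*} {s : Finset ι} {f : ι → ℕ → ℝ} {p : ι → ℝ[X]}
    (h : ∀ i ∈ s, HasExpansion n (f i) (p i)) :
    HasExpansion n (fun b ↦ ∑ i ∈ s, f i b) (∑ i ∈ s, p i) :=
  (IsBigO.sum h).congr_left fun b ↦ by
    rw [Finset.sum_apply, eval_finsetSum, sum_sub_distrib]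

theorem hasExpansion_zero_of_X_pow_dvd (h : X ^ n ∣ p) :
    HasExpansion n (fun _ ↦ 0) p := by
  obtain ⟨r, rfl⟩ := h
  simpa [HasExpansion] using ((isBigO_refl (fun b : ℕ ↦ (b : ℝ)⁻¹ ^ n) atTop).mul
    (isBigO_eval_inv r)).neg_left

theorem HasExpansion.congr_coeff (hf : HasExpansion n f p) (h : ∀ k < n, p.coeff k = q.coeff k) :
    HasExpansion n f q := by
  have hdvd : X ^ n ∣ q - p := X_pow_dvd_iff.2 fun k hk ↦ by rw [coeff_sub, h k hk, sub_self]
  simpa using hf.add (hasExpansion_zero_of_X_pow_dvd hdvd)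

theorem HasExpansion.of_mul_one_sub_inv_pow {k : ℕ} (hk : k ≠ 0)
    (hf : HasExpansion n (fun b ↦ f b * (1 - (b : ℝ)⁻¹ ^ k)) (q * (1 - X ^ k))) :
    HasExpansion n f q := by
  have hlim : Tendsto (fun b : ℕ ↦ 1 - (b : ℝ)⁻¹ ^ k) atTop (nhds 1) := by
    simpa [hk] using (tendsto_inv_atTop_nhds_zero_nat (𝕜 := ℝ)).pow k |>.const_sub 1
  have hinv := (hlim.inv₀ one_ne_zero).isBigO_one ℝ
  refine (IsBigO.mul hf hinv).congr' ?_ (.of_forall fun b ↦ mul_one _)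
  filter_upwards [hlim.eventually_ne one_ne_zero] with b hb
  simp only [eval_mul, eval_sub, eval_one, eval_pow, eval_X, ← sub_mul]
  exact mul_inv_cancel_right₀ hb _

end HasExpansion

section ZetaExpansion

open Polynomial hiding bernoulli bernoulli_zero bernoulli_one
open scoped Nat

/-- The polynomial part, to order `i + n + 2`, of the expansion of `zetaPartialSum (i + 2) b` in
powers of `1 / b`. -/
noncomputable def zetaEulerMaclaurinPoly (i n : ℕ) : ℝ[X] :=
  C (zetaR (i + 2)) - ∑ k ∈ range (n + 1),
    C ((-1) ^ k * bernoulli k * (i + k)! / ((i + 1)! * k !) : ℝ) * X ^ (i + 1 + k)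

theorem zetaPartialSum_sub_eval (i n b : ℕ) :
    zetaPartialSum (i + 2) b - (zetaEulerMaclaurinPoly i n).eval (b : ℝ)⁻¹ =
      (-1) ^ i / (i + 1)! * ((-1) ^ (i + 1) * (i + 1)! *
        (zetaR (i + 2) - zetaPartialSum (i + 2) b) +
          ∑ k ∈ range (n + 1), (bernoulli k : ℝ) / k ! * logIterDeriv (i + 1 + k) b) := by
  have hsign : ((-1 : ℝ) ^ i) ^ 2 = 1 := by rw [← pow_mul, mul_comm, pow_mul]; norm_num
  have hsum : ∑ k ∈ range (n + 1), (bernoulli k : ℝ) / k ! * logIterDeriv (i + 1 + k) b =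
      (-1) ^ i * (i + 1)! * ∑ k ∈ range (n + 1),
        (-1) ^ k * bernoulli k * (i + k)! / ((i + 1)! * k !) * (b : ℝ)⁻¹ ^ (i + 1 + k) := by
    rw [mul_sum]
    refine sum_congr rfl fun k _ ↦ ?_
    rw [add_right_comm, logIterDeriv, inv_pow, pow_add (-1 : ℝ)]
    field_simp
  simp only [zetaEulerMaclaurinPoly, eval_sub, eval_C, eval_finsetSum, eval_mul, eval_pow, eval_X]
  rw [hsum]
  set S := ∑ k ∈ range (n + 1),
    (-1) ^ k * (bernoulli k : ℝ) * (i + k)! / ((i + 1)! * k !) * (b : ℝ)⁻¹ ^ (i + 1 + k)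
  field_simp
  linear_combination (zetaR (i + 2) - zetaPartialSum (i + 2) b - S) * hsign

theorem hasExpansion_zetaPartialSum (i n : ℕ) :
    HasExpansion (i + n + 2) (zetaPartialSum (i + 2)) (zetaEulerMaclaurinPoly i n) := by
  refine .of_bound ((i + 1 + n)! / (i + 1)! : ℝ) ?_
  filter_upwards [eventually_ge_atTop 1] with b hb
  have hbound := abs_zetaR_sub_zetaPartialSum_add_sum_le i.succ_pos n hb
  rw [zetaPartialSum_sub_eval, norm_mul, norm_div, norm_pow, norm_neg, norm_one, one_pow,
    norm_pow, norm_inv, Real.norm_natCast, Real.norm_natCast, div_mul_eq_mul_div, one_mul,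
    div_mul_eq_mul_div, inv_pow, show i + n + 2 = i + 1 + n + 1 by ring, Real.norm_eq_abs]
  gcongr

/-- The first terms of the expansion of `zetaPartialSum (j + 1) b` in powers of `1 / b`. -/
noncomputable def zetaPoly : ℕ → ℝ[X]
  | 1 => C (zetaR 2) - X - C (1 / 2) * X ^ 2 - C (1 / 6) * X ^ 3
  | 2 => C (zetaR 3) - C (1 / 2) * X ^ 2 - C (1 / 2) * X ^ 3
  | j => C (zetaR (j + 1))

theorem hasExpansion_zetaPoly {j : ℕ} (hj : j ≠ 0) :
    HasExpansion (6 - j) (zetaPartialSum (j + 1)) (zetaPoly j) := by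
  match j with
  | 1 =>
    refine (hasExpansion_zetaPartialSum 0 3).congr_coeff fun l _ ↦ ?_
    have hthree : bernoulli 3 = 0 := bernoulli_eq_zero_of_odd (by decide) (by norm_num)
    congr 1
    norm_num [zetaEulerMaclaurinPoly, zetaPoly, sum_range_succ, Nat.factorial, bernoulli_one,
      bernoulli_two, hthree]
    ring
  | 2 =>
    refine (hasExpansion_zetaPartialSum 1 1).congr_coeff fun l _ ↦ ?_
    congr 1
    norm_num [zetaEulerMaclaurinPoly, zetaPoly, sum_range_succ, Nat.factorial, bernoulli_one]
    ring
  | j + 3 =>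
    refine ((hasExpansion_zetaPartialSum (j + 2) 0).mono (by lia)).congr_coeff fun l hl ↦ ?_
    have hlj : l ≠ j + 2 + 1 := by lia
    simp [zetaEulerMaclaurinPoly, zetaPoly, coeff_X_pow, hlj]

end ZetaExpansion

section Transfer

variable {b d : ℕ} {f g : ℝ → ℝ} {C : ℝ}

/-- The transfer operator `f ↦ b⁻¹ ∑_{a ≠ d} f ((a + x) / b)`, summed over the base-`b` digits
`a ≠ d`: it averages `f` over the preimages of `x` obtained by prepending an admissible digit. -/
noncomputable def transfer (b d : ℕ) : (ℝ → ℝ) →ₗ[ℝ] (ℝ → ℝ) where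
  toFun f x := (b : ℝ)⁻¹ * ∑ a ∈ (range b).erase d, f ((a + x) / b)
  map_add' f g := by ext x; simp [sum_add_distrib, mul_add]
  map_smul' c f := by ext x; simp [← mul_sum, mul_left_comm]

/-- The functional `μ f = ∑_l (T^l f)(0)`, where `T` is `transfer b d`: integration against the
measure putting mass `b^{-l}` at each `b`-adic rational `0.a₁…a_l` with all digits `a_i ≠ d`
(one atom for each word, so that rationals are counted with multiplicity). -/
noncomputable def digitIntegral (b d : ℕ) (f : ℝ → ℝ) : ℝ := ∑' l : ℕ, (transfer b d ^ l) f 0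

theorem transfer_apply (f : ℝ → ℝ) (x : ℝ) :
    transfer b d f x = (b : ℝ)⁻¹ * ∑ a ∈ (range b).erase d, f ((a + x) / b) := rfl

theorem add_div_mem_unitInterval {a : ℕ} (ha : a < b) {x : ℝ} (hx : x ∈ Icc (0 : ℝ) 1) :
    (a + x) / b ∈ Icc (0 : ℝ) 1 := by
  have hab : (a : ℝ) + 1 ≤ b := mod_cast ha
  have : (0 : ℝ) ≤ a := a.cast_nonneg
  exact ⟨div_nonneg (by linarith [hx.1]) (by linarith),
    div_le_one_of_le₀ (by linarith [hx.2]) (by linarith)⟩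

theorem card_range_erase (hdb : d < b) : (((range b).erase d).card : ℝ) = b - 1 := by
  rw [card_erase_of_mem (Finset.mem_range.2 hdb), card_range, Nat.cast_pred (by lia)]

theorem abs_transfer_le (hdb : d < b) (hf : ∀ x ∈ Icc (0 : ℝ) 1, |f x| ≤ C) :
    ∀ x ∈ Icc (0 : ℝ) 1, |transfer b d f x| ≤ (1 - (b : ℝ)⁻¹) * C := by
  intro x hx
  have hb : (b : ℝ) ≠ 0 := Nat.cast_ne_zero.2 (by lia)
  rw [transfer_apply, abs_mul, abs_of_nonneg (by positivity)]
  calc (b : ℝ)⁻¹ * |∑ a ∈ (range b).erase d, f ((a + x) / b)|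
      ≤ (b : ℝ)⁻¹ * ∑ _a ∈ (range b).erase d, C := by
        gcongr
        refine (abs_sum_le_sum_abs _ _).trans (sum_le_sum fun a ha ↦ hf _ ?_)
        exact add_div_mem_unitInterval (Finset.mem_range.1 (mem_of_mem_erase ha)) hx
    _ = (1 - (b : ℝ)⁻¹) * C := by
        rw [sum_const, nsmul_eq_mul, card_range_erase hdb]
        field_simp

theorem abs_transfer_pow_le (hdb : d < b) (hf : ∀ x ∈ Icc (0 : ℝ) 1, |f x| ≤ C) (l : ℕ) :
    ∀ x ∈ Icc (0 : ℝ) 1, |(transfer b d ^ l) f x| ≤ (1 - (b : ℝ)⁻¹) ^ l * C := by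
  induction l with
  | zero => simpa using hf
  | succ l ih =>
    rw [pow_succ', Module.End.mul_apply, pow_succ', mul_assoc]
    exact abs_transfer_le hdb ih

theorem hasSum_one_sub_inv_pow (hb : 1 ≤ b) (C : ℝ) :
    HasSum (fun l : ℕ ↦ (1 - (b : ℝ)⁻¹) ^ l * C) (b * C) := by
  have hinv : 0 < (b : ℝ)⁻¹ ∧ (b : ℝ)⁻¹ ≤ 1 := ⟨by positivity, Nat.cast_inv_le_one b⟩
  have hgeom := hasSum_geometric_of_lt_one (r := 1 - (b : ℝ)⁻¹) (by linarith) (by linarith)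
  simpa using hgeom.mul_right C

theorem summable_transfer_pow (hdb : d < b) (hf : ContinuousOn f (Icc 0 1)) :
    Summable fun l ↦ (transfer b d ^ l) f 0 := by
  obtain ⟨C, hC⟩ := isCompact_Icc.exists_bound_of_continuousOn hf
  exact .of_norm_bounded (hasSum_one_sub_inv_pow (Nat.one_le_of_lt hdb) C).summable
    fun l ↦ abs_transfer_pow_le hdb hC l 0 (by simp)

theorem abs_digitIntegral_le (hdb : d < b) (hf : ∀ x ∈ Icc (0 : ℝ) 1, |f x| ≤ C) :
    |digitIntegral b d f| ≤ b * C := by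
  rw [digitIntegral, ← Real.norm_eq_abs]
  exact tsum_of_norm_bounded (hasSum_one_sub_inv_pow (Nat.one_le_of_lt hdb) C)
    fun l ↦ abs_transfer_pow_le hdb hf l 0 (by simp)

theorem digitIntegral_eq_add_transfer (hdb : d < b) (hf : ContinuousOn f (Icc 0 1)) :
    digitIntegral b d f = f 0 + digitIntegral b d (transfer b d f) := by
  rw [digitIntegral, (summable_transfer_pow hdb hf).tsum_eq_zero_add]
  simp [digitIntegral, pow_succ]

theorem digitIntegral_one (hdb : d < b) : digitIntegral b d 1 = b := by
  have hb : (b : ℝ) ≠ 0 := by exact_mod_cast (d.zero_le.trans_lt hdb).ne'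
  have htransfer : transfer b d 1 = (1 - (b : ℝ)⁻¹) • 1 := by
    ext x
    simp only [transfer_apply, Pi.one_apply, Pi.smul_apply, sum_const, nsmul_eq_mul,
      card_range_erase hdb, smul_eq_mul]
    field_simp
  have hpow (l : ℕ) : (transfer b d ^ l) 1 = (1 - (b : ℝ)⁻¹) ^ l • 1 := by
    induction l with
    | zero => simp
    | succ l ih =>
      rw [pow_succ', Module.End.mul_apply, ih, map_smul, htransfer, smul_smul, pow_succ]
  simpa [digitIntegral, hpow] using (hasSum_one_sub_inv_pow (Nat.one_le_of_lt hdb) 1).tsum_eq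

theorem digitIntegral_sub (hdb : d < b) (hf : ContinuousOn f (Icc 0 1))
    (hg : ContinuousOn g (Icc 0 1)) :
    digitIntegral b d (f - g) = digitIntegral b d f - digitIntegral b d g := by
  simpa [digitIntegral] using
    (summable_transfer_pow hdb hf).tsum_sub (summable_transfer_pow hdb hg)

theorem digitIntegral_smul (c : ℝ) (f : ℝ → ℝ) :
    digitIntegral b d (c • f) = c * digitIntegral b d f := by
  simp [digitIntegral, tsum_mul_left]

theorem digitIntegral_sum {ι : Type*} (hdb : d < b) (s : Finset ι) (c : ι → ℝ) (g : ι → ℝ → ℝ)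
    (hg : ∀ i ∈ s, ContinuousOn (g i) (Icc 0 1)) :
    digitIntegral b d (fun x ↦ ∑ i ∈ s, c i * g i x) = ∑ i ∈ s, c i * digitIntegral b d (g i) := by
  have hfun : (fun x ↦ ∑ i ∈ s, c i * g i x) = ∑ i ∈ s, c i • g i := by ext x; simp
  have hsum : ∀ i ∈ s, Summable fun l ↦ (transfer b d ^ l) (c i • g i) 0 := fun i hi ↦
    summable_transfer_pow hdb ((hg i hi).const_smul (c i))
  simp_rw [← digitIntegral_smul, hfun, digitIntegral, map_sum, Finset.sum_apply]
  exact Summable.tsum_finsetSum hsum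

theorem abs_digitIntegral_sub_le (hdb : d < b) (hf : ContinuousOn f (Icc 0 1))
    (hg : ContinuousOn g (Icc 0 1)) (h : ∀ x ∈ Icc (0 : ℝ) 1, |f x - g x| ≤ C) :
    |digitIntegral b d f - digitIntegral b d g| ≤ b * C := by
  rw [← digitIntegral_sub hdb hf hg]
  exact abs_digitIntegral_le hdb h

end Transfer

section MissingDigit

variable {b d : ℕ}

/-- The positive integers with exactly `l + 1` digits in base `b`, none of them equal to `d`. -/
def missingDigit (b d l : ℕ) : Finset ℕ := {m ∈ Finset.Ico (b ^ l) (b ^ (l + 1)) | d ∉ b.digits m}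

/-- The shifted harmonic sum `∑ 1 / (m + x)` over the integers with `l + 1` digits, none of
which is `d`. -/
noncomputable def missingDigitSum (b d l : ℕ) (x : ℝ) : ℝ :=
  ∑ m ∈ missingDigit b d l, ((m : ℝ) + x)⁻¹

theorem sum_Ico_mul_left {M : Type*} [AddCommMonoid M] (g : ℕ → M) (b : ℕ) {m n : ℕ} (h : m ≤ n) :
    ∑ k ∈ Finset.Ico (b * m) (b * n), g k =
      ∑ k ∈ Finset.Ico m n, ∑ a ∈ range b, g (b * k + a) := by
  induction n, h using Nat.le_induction with
  | base => simp
  | succ n h ih =>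
    rw [sum_Ico_succ_top h, ← ih, mul_add_one, ← sum_Ico_consecutive g (Nat.mul_le_mul_left b h)
      (Nat.le_add_right _ b), sum_Ico_eq_sum_range g (b * n), Nat.add_sub_cancel_left]

theorem notMem_digits_mul_add (hb : 2 ≤ b) {m a : ℕ} (hm : m ≠ 0) (ha : a < b) :
    d ∉ b.digits (b * m + a) ↔ a ≠ d ∧ d ∉ b.digits m := by
  rw [add_comm, Nat.digits_add b hb a m ha (.inr hm), List.mem_cons, not_or, ne_comm]

theorem sum_missingDigit_succ {M : Type*} [AddCommMonoid M] (hb : 2 ≤ b) (l : ℕ) (g : ℕ → M) :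
    ∑ m ∈ missingDigit b d (l + 1), g m =
      ∑ m ∈ missingDigit b d l, ∑ a ∈ (range b).erase d, g (b * m + a) := by
  have hbl : b ^ l ≤ b ^ (l + 1) := Nat.pow_le_pow_right (by lia) l.le_succ
  rw [missingDigit, sum_filter, pow_succ' b l, pow_succ' b (l + 1), sum_Ico_mul_left _ _ hbl,
    missingDigit, sum_filter]
  refine sum_congr rfl fun m hm ↦ ?_
  have hm0 : m ≠ 0 := ((Nat.pow_pos (by lia)).trans_le (Finset.mem_Ico.1 hm).1).ne'
  rw [← filter_ne', sum_filter]
  by_cases hdm : d ∈ b.digits m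
  · rw [if_neg (not_not.2 hdm)]
    exact sum_eq_zero fun a ha ↦ if_neg fun h ↦
      ((notMem_digits_mul_add hb hm0 (Finset.mem_range.1 ha)).1 h).2 hdm
  · rw [if_pos hdm]
    refine sum_congr rfl fun a ha ↦ if_congr ?_ rfl rfl
    rw [notMem_digits_mul_add hb hm0 (Finset.mem_range.1 ha), and_iff_left hdm]

theorem transfer_missingDigitSum (hb : 2 ≤ b) (l : ℕ) :
    transfer b d (missingDigitSum b d l) = missingDigitSum b d (l + 1) := by
  ext x
  have hb0 : (b : ℝ) ≠ 0 := by positivity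
  simp only [transfer_apply, missingDigitSum, sum_missingDigit_succ hb, mul_sum]
  rw [sum_comm]
  refine sum_congr rfl fun m _ ↦ sum_congr rfl fun a _ ↦ ?_
  rw [← mul_inv, mul_add, mul_div_cancel₀ _ hb0]
  push_cast
  ring

theorem transfer_pow_missingDigitSum (hb : 2 ≤ b) (l : ℕ) :
    (transfer b d ^ l) (missingDigitSum b d 0) = missingDigitSum b d l := by
  induction l with
  | zero => simp
  | succ l ih => rw [pow_succ', Module.End.mul_apply, ih, transfer_missingDigitSum hb]

theorem continuousOn_missingDigitSum (hb : b ≠ 0) (l : ℕ) :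
    ContinuousOn (missingDigitSum b d l) (Icc 0 1) := by
  refine continuousOn_finsetSum _ fun m hm ↦ ContinuousOn.inv₀ (by fun_prop) fun x hx ↦ ?_
  have hm0 : (0 : ℝ) < m := by
    exact_mod_cast (Nat.pow_pos hb.bot_lt).trans_le (Finset.mem_Ico.1 (mem_of_mem_filter m hm)).1
  linarith [hx.1]

theorem sum_range_irwin_term (hb : 2 ≤ b) (L : ℕ) :
    ∑ m ∈ range (b ^ L), (if 0 < m ∧ (b.digits m).count d = 0 then (1 : ℝ) / m else 0) =
      ∑ l ∈ range L, missingDigitSum b d l 0 := by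
  induction L with
  | zero => simp
  | succ L ih =>
    rw [sum_range_succ, ← ih, ← sum_range_add_sum_Ico _ (Nat.pow_le_pow_right (by lia) L.le_succ),
      missingDigitSum, missingDigit, sum_filter]
    congr 1
    refine sum_congr rfl fun m hm ↦ ?_
    have hm0 : 0 < m := (Nat.pow_pos (by lia)).trans_le (Finset.mem_Ico.1 hm).1
    simp [hm0, List.count_eq_zero]

theorem irwinSum_zero_eq_digitIntegral (hb : 2 ≤ b) (hdb : d < b) :
    irwinSum b d 0 = digitIntegral b d (missingDigitSum b d 0) := by
  have hnonneg (m : ℕ) :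
      0 ≤ if 0 < m ∧ (b.digits m).count d = 0 then (1 : ℝ) / m else 0 := by
    split_ifs <;> positivity
  refine ((hasSum_iff_tendsto_nat_of_nonneg hnonneg _).2 ?_).tsum_eq
  rw [tendsto_iff_tendsto_subseq_of_monotone
    (fun m n hmn ↦ sum_le_sum_of_subset_of_nonneg (range_mono hmn) fun i _ _ ↦ hnonneg i)
    (tendsto_pow_atTop_atTop_of_one_lt hb)]
  refine (summable_transfer_pow hdb
    (continuousOn_missingDigitSum (by lia) 0)).hasSum.tendsto_sum_nat.congr fun L ↦ ?_
  simp only [Function.comp_apply, sum_range_irwin_term hb, transfer_pow_missingDigitSum hb]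

end MissingDigit

section Expansion

open scoped Nat

variable {b d : ℕ}

/-- The Bernoulli moment `b * μ(B_k)` of the functional `μ = digitIntegral b d`, normalised to stay
bounded as `b → ∞` for `k ≥ 1`. -/
noncomputable def bernoulliMoment (b d k : ℕ) : ℝ := b * digitIntegral b d (bernoulliFun k)

/-- The shifted power moment `b⁻¹ * μ((d + x) ^ i)` of the functional `μ = digitIntegral b d`,
normalised to stay bounded as `b → ∞`. -/
noncomputable def powerMoment (b d i : ℕ) : ℝ :=
  (b : ℝ)⁻¹ * digitIntegral b d fun x ↦ (d + x) ^ i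

theorem sum_missingDigit_zero {M : Type*} [AddCommGroup M] (hd : 1 ≤ d) (hdb : d < b)
    (g : ℕ → M) :
    ∑ m ∈ missingDigit b d 0, g m = ∑ m ∈ Finset.Ico 1 b, g m - g d := by
  have hdigit : missingDigit b d 0 = (Finset.Ico 1 b).erase d := by
    ext m
    simp only [missingDigit, pow_zero, zero_add, pow_one, Finset.mem_filter, Finset.mem_erase,
      Finset.mem_Ico, and_comm (a := m ≠ d)]
    refine and_congr_right fun hm ↦ ?_
    rw [Nat.digits_of_lt b m (by lia) hm.2, List.mem_singleton, ne_comm]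
  rw [hdigit, eq_sub_iff_add_eq, sum_erase_add _ _ (Finset.mem_Ico.2 ⟨hd, hdb⟩)]

theorem sum_missingDigit_one {M : Type*} [AddCommGroup M] (hd : 1 ≤ d) (hdb : d < b)
    (g : ℕ → M) :
    ∑ m ∈ missingDigit b d 1, g m =
      ∑ m ∈ Finset.Ico b (b * b), g m - ∑ m ∈ Finset.Ico (b * d) (b * (d + 1)), g m -
        ∑ m ∈ missingDigit b d 0, g (b * m + d) := by
  have herase (m : ℕ) : ∑ a ∈ (range b).erase d, g (b * m + a) =
      ∑ a ∈ range b, g (b * m + a) - g (b * m + d) := by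
    rw [eq_sub_iff_add_eq, sum_erase_add _ _ (Finset.mem_range.2 hdb)]
  rw [sum_missingDigit_succ (by lia), sum_congr rfl fun m _ ↦ herase m, sum_sub_distrib,
    sum_missingDigit_zero hd hdb fun m ↦ ∑ a ∈ range b, g (b * m + a),
    ← sum_Ico_mul_left g b (show 1 ≤ b by lia), mul_one,
    sum_Ico_mul_left g b (show d ≤ d + 1 by lia), Nat.Ico_succ_singleton, sum_singleton]

theorem abs_inv_add_sub_geom_sum_le {q y : ℝ} (hq : 0 < q) (hy : 0 ≤ y) (n : ℕ) :
    |(q + y)⁻¹ - ∑ j ∈ range n, (-1) ^ j * (q ^ (j + 1))⁻¹ * y ^ j| ≤ y ^ n * (q ^ (n + 1))⁻¹ := by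
  have hrem : (q + y)⁻¹ - ∑ j ∈ range n, (-1) ^ j * (q ^ (j + 1))⁻¹ * y ^ j =
      (-1) ^ n * (y ^ n * (q ^ n)⁻¹ * (q + y)⁻¹) := by
    induction n with
    | zero => simp
    | succ n ih =>
      rw [sum_range_succ, ← sub_sub, ih]
      field_simp
      ring
  rw [hrem, abs_mul, abs_pow, abs_neg, abs_one, one_pow, one_mul, abs_of_nonneg (by positivity),
    mul_assoc, pow_succ, mul_inv]
  gcongr
  linarith

/-- The coefficient of `B_k(x)` in the expansion of `missingDigitSum b d 1`. -/
noncomputable def bernoulliCoeff (b d k : ℕ) : ℝ :=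
  (k ! : ℝ)⁻¹ * (logIterDeriv k (b * b : ℕ) - logIterDeriv k b -
    (logIterDeriv k (b * (d + 1) : ℕ) - logIterDeriv k (b * d : ℕ)))

/-- The coefficient of `-(d + x) ^ j` in the expansion of `missingDigitSum b d 1`. -/
noncomputable def powerCoeff (b d j : ℕ) : ℝ :=
  (-1) ^ j * ((b : ℝ) ^ (j + 1))⁻¹ * (zetaPartialSum (j + 1) b - ((d : ℝ) ^ (j + 1))⁻¹)

theorem abs_sum_inv_mul_add_sub_le (hd : 1 ≤ d) (hdb : d < b) {n : ℕ} (hn : 1 ≤ n) {x : ℝ}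
    (hx : x ∈ Icc (0 : ℝ) 1) :
    |∑ m ∈ missingDigit b d 0, ((b * m + d : ℕ) + x)⁻¹ -
      ∑ j ∈ range n, powerCoeff b d j * (d + x) ^ j| ≤
      ((d : ℝ) + 1) ^ n * zetaR (n + 1) * ((b : ℝ) ^ (n + 1))⁻¹ := by
  have hpos : ∀ m ∈ missingDigit b d 0, (0 : ℝ) < m := fun m hm ↦ by
    have := (Finset.mem_Ico.1 (mem_of_mem_filter m hm)).1
    exact_mod_cast this
  have hb0 : (0 : ℝ) < b := by exact_mod_cast d.zero_le.trans_lt hdb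
  have hmain : ∑ j ∈ range n, powerCoeff b d j * (d + x) ^ j = ∑ m ∈ missingDigit b d 0,
      ∑ j ∈ range n, (-1) ^ j * (((b * m : ℝ)) ^ (j + 1))⁻¹ * (d + x) ^ j := by
    rw [sum_comm]
    refine sum_congr rfl fun j _ ↦ ?_
    rw [powerCoeff, zetaPartialSum, ← sum_missingDigit_zero hd hdb fun m ↦ ((m : ℝ) ^ (j + 1))⁻¹,
      mul_sum, sum_mul]
    simp only [mul_pow, mul_inv, mul_assoc]
  have hterm : ∀ m ∈ missingDigit b d 0, |((b * m + d : ℕ) + x)⁻¹ -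
      ∑ j ∈ range n, (-1) ^ j * (((b * m : ℝ)) ^ (j + 1))⁻¹ * (d + x) ^ j| ≤
      ((d : ℝ) + 1) ^ n * ((b : ℝ) ^ (n + 1))⁻¹ * ((m : ℝ) ^ (n + 1))⁻¹ := fun m hm ↦ by
    have hgeom := abs_inv_add_sub_geom_sum_le (mul_pos hb0 (hpos m hm))
      (add_nonneg d.cast_nonneg hx.1) n
    push_cast
    rw [add_assoc]
    refine hgeom.trans ?_
    rw [mul_pow, mul_inv, ← mul_assoc]
    have := hx.1
    gcongr
    exact hx.2
  rw [hmain, ← sum_sub_distrib]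
  calc _ ≤ ∑ m ∈ missingDigit b d 0,
        ((d : ℝ) + 1) ^ n * ((b : ℝ) ^ (n + 1))⁻¹ * ((m : ℝ) ^ (n + 1))⁻¹ :=
        (abs_sum_le_sum_abs _ _).trans (sum_le_sum hterm)
    _ ≤ ((d : ℝ) + 1) ^ n * ((b : ℝ) ^ (n + 1))⁻¹ * zetaR (n + 1) := by
        rw [← mul_sum, sum_missingDigit_zero hd hdb fun m ↦ ((m : ℝ) ^ (n + 1))⁻¹]
        gcongr
        have hzeta := zetaPartialSum_le (s := n + 1) (by lia) b
        exact (sub_le_self _ (by positivity)).trans hzeta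
    _ = _ := by ring

theorem abs_missingDigitSum_one_sub_le (hd : 1 ≤ d) (hdb : d < b) {n : ℕ} (hn : 1 ≤ n) {x : ℝ}
    (hx : x ∈ Icc (0 : ℝ) 1) :
    |missingDigitSum b d 1 x - (∑ k ∈ range (n + 1), bernoulliCoeff b d k * bernoulliFun k x -
      ∑ j ∈ range n, powerCoeff b d j * (d + x) ^ j)| ≤
      (2 * n ! + ((d : ℝ) + 1) ^ n * zetaR (n + 1)) * ((b : ℝ) ^ (n + 1))⁻¹ := by
  have hcoeff : ∑ k ∈ range (n + 1), bernoulliCoeff b d k * bernoulliFun k x =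
      bernoulliSum logIterDeriv n b (b * b : ℕ) x -
        bernoulliSum logIterDeriv n (b * d : ℕ) (b * (d + 1) : ℕ) x := by
    rw [bernoulliSum, bernoulliSum, ← sum_sub_distrib]
    exact sum_congr rfl fun k _ ↦ by rw [bernoulliCoeff]; ring
  have hbd : b ≤ b * d := Nat.le_mul_of_pos_right b hd
  have hall := abs_sum_logIterDeriv_sub_bernoulliSum_le 0 n (N := b) (M := b * b) (by lia)
    (Nat.le_mul_self b) hx
  have hdig := abs_sum_logIterDeriv_sub_bernoulliSum_le 0 n (N := b * d) (M := b * (d + 1))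
    (by lia) (Nat.mul_le_mul_left b d.le_succ) hx
  have hcorner := abs_sum_inv_mul_add_sub_le hd hdb hn hx
  have hmono : (n ! : ℝ) * (((b * d : ℕ) : ℝ) ^ (n + 1))⁻¹ ≤ n ! * ((b : ℝ) ^ (n + 1))⁻¹ := by
    have : (0 : ℝ) < b := by exact_mod_cast d.zero_le.trans_lt hdb
    gcongr
  simp only [zero_add, logIterDeriv, pow_zero, Nat.factorial_zero, Nat.cast_one, one_mul,
    pow_one] at hall hdig
  rw [missingDigitSum, sum_missingDigit_one hd hdb, hcoeff]
  rw [abs_le] at *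
  constructor <;> linarith

theorem digitIntegral_bernoulliFun (hb : b ≠ 0) (k : ℕ) :
    digitIntegral b d (bernoulliFun k) = (b : ℝ)⁻¹ * bernoulliMoment b d k := by
  rw [bernoulliMoment, inv_mul_cancel_left₀ (Nat.cast_ne_zero.2 hb)]

theorem digitIntegral_add_pow (hb : b ≠ 0) (i : ℕ) :
    digitIntegral b d (fun x ↦ (d + x) ^ i) = b * powerMoment b d i := by
  rw [powerMoment, mul_inv_cancel_left₀ (Nat.cast_ne_zero.2 hb)]

theorem digitIntegral_bernoulliFun_zero (hdb : d < b) :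
    digitIntegral b d (bernoulliFun 0) = b := by
  rw [show bernoulliFun 0 = 1 from funext bernoulliFun_zero, digitIntegral_one hdb]

theorem powerMoment_zero (hdb : d < b) : powerMoment b d 0 = 1 := by
  have hone : (fun x : ℝ ↦ ((d : ℝ) + x) ^ 0) = 1 := by ext; simp
  rw [powerMoment, hone, digitIntegral_one hdb, inv_mul_cancel₀]
  exact_mod_cast (d.zero_le.trans_lt hdb).ne'

theorem missingDigitSum_zero_zero (hd : 1 ≤ d) (hdb : d < b) :
    missingDigitSum b d 0 0 = b * powerCoeff b d 0 := by
  have hb : (b : ℝ) ≠ 0 := by exact_mod_cast (d.zero_le.trans_lt hdb).ne'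
  rw [missingDigitSum, sum_missingDigit_zero hd hdb fun m ↦ ((m : ℝ) + 0)⁻¹]
  simp [powerCoeff, zetaPartialSum, hb]

theorem abs_irwinSum_zero_sub_le (hd : 1 ≤ d) (hdb : d < b) {n : ℕ} (hn : 1 ≤ n) :
    |irwinSum b d 0 - (b * bernoulliCoeff b d 0 +
      ∑ k ∈ range n, (b : ℝ)⁻¹ * bernoulliCoeff b d (k + 1) * bernoulliMoment b d (k + 1) -
      ∑ j ∈ Finset.Ico 1 n, b * powerCoeff b d j * powerMoment b d j)| ≤
      (2 * n ! + ((d : ℝ) + 1) ^ n * zetaR (n + 1)) * ((b : ℝ) ^ n)⁻¹ := by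
  have hb : b ≠ 0 := by lia
  have hb0 : (b : ℝ) ≠ 0 := Nat.cast_ne_zero.2 hb
  have hcont := continuousOn_missingDigitSum (d := d) hb
  have hμ := abs_digitIntegral_sub_le hdb (hcont 1)
    (g := (fun x ↦ ∑ k ∈ range (n + 1), bernoulliCoeff b d k * bernoulliFun k x) -
      fun x ↦ ∑ j ∈ range n, powerCoeff b d j * (d + x) ^ j) (by fun_prop)
    fun x hx ↦ abs_missingDigitSum_one_sub_le hd hdb hn hx
  have hbernoulli : digitIntegral b d
      (fun x ↦ ∑ k ∈ range (n + 1), bernoulliCoeff b d k * bernoulliFun k x) =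
      b * bernoulliCoeff b d 0 +
        ∑ k ∈ range n, (b : ℝ)⁻¹ * bernoulliCoeff b d (k + 1) * bernoulliMoment b d (k + 1) := by
    rw [digitIntegral_sum hdb _ _ _ fun _ _ ↦ by fun_prop, sum_range_succ',
      digitIntegral_bernoulliFun_zero hdb, add_comm, mul_comm (b : ℝ)]
    simp only [digitIntegral_bernoulliFun hb, mul_left_comm _ (b : ℝ)⁻¹, mul_assoc]
  have hpower : digitIntegral b d (fun x ↦ ∑ j ∈ range n, powerCoeff b d j * (d + x) ^ j) =
      b * powerCoeff b d 0 + ∑ j ∈ Finset.Ico 1 n, b * powerCoeff b d j * powerMoment b d j := by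
    rw [digitIntegral_sum hdb _ _ (fun j x ↦ ((d : ℝ) + x) ^ j) fun _ _ ↦ by fun_prop]
    simp only [digitIntegral_add_pow hb, mul_left_comm _ (b : ℝ), ← mul_assoc (b : ℝ)]
    rw [← sum_range_add_sum_Ico _ hn, sum_range_one, powerMoment_zero hdb, mul_one]
  rw [digitIntegral_sub hdb (by fun_prop) (by fun_prop), hbernoulli, hpower] at hμ
  rw [irwinSum_zero_eq_digitIntegral (by lia) hdb, digitIntegral_eq_add_transfer hdb (hcont 0),
    transfer_missingDigitSum (by lia), missingDigitSum_zero_zero hd hdb]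
  convert hμ using 1
  · congr 1
    ring
  · rw [pow_succ]
    field_simp

end Expansion

section MomentRecursion

variable {b d : ℕ}

theorem transfer_bernoulliFun (hdb : d < b) (k : ℕ) (x : ℝ) :
    transfer b d (bernoulliFun k) x =
      ((b : ℝ) ^ k)⁻¹ * bernoulliFun k x - (b : ℝ)⁻¹ * bernoulliFun k ((d + x) / b) := by
  have hb : b ≠ 0 := by lia
  have hb0 : (b : ℝ) ≠ 0 := Nat.cast_ne_zero.2 hb
  have hmul := bernoulliFun_mul k hb (x / b)
  have herase := sum_erase_add _ (fun a : ℕ ↦ bernoulliFun k ((a + x) / b))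
    (Finset.mem_range.2 hdb)
  rw [mul_div_cancel₀ _ hb0, sum_congr rfl fun a _ ↦ by rw [← add_div, add_comm x],
    ← herase] at hmul
  rw [transfer_apply, hmul]
  field_simp
  ring

theorem bernoulliFun_eq_sum (k : ℕ) (y : ℝ) :
    bernoulliFun k y = ∑ i ∈ range (k + 1), (bernoulli (k - i) : ℝ) * k.choose i * y ^ i := by
  simp [bernoulliFun, Polynomial.bernoulli_def, Polynomial.eval_finsetSum, Polynomial.map_sum]

theorem bernoulliMoment_recursion (hdb : d < b) (k : ℕ) :
    bernoulliMoment b d k * (1 - ((b : ℝ) ^ k)⁻¹) = -∑ i ∈ range k,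
      (bernoulli (k - (i + 1)) : ℝ) * k.choose (i + 1) *
        ((b : ℝ) ^ i)⁻¹ * powerMoment b d (i + 1) := by
  have hb : b ≠ 0 := by lia
  have hb0 : (b : ℝ) ≠ 0 := Nat.cast_ne_zero.2 hb
  have htransfer : transfer b d (bernoulliFun k) = ((b : ℝ) ^ k)⁻¹ • bernoulliFun k -
      fun x ↦ ∑ i ∈ range (k + 1),
        (b : ℝ)⁻¹ * (bernoulli (k - i) * k.choose i * ((b : ℝ) ^ i)⁻¹) * (d + x) ^ i := by
    ext x
    rw [transfer_bernoulliFun hdb, bernoulliFun_eq_sum k ((d + x) / b), mul_sum]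
    refine congr_arg _ (sum_congr rfl fun i _ ↦ ?_)
    rw [div_pow]
    ring
  have hμ := digitIntegral_eq_add_transfer hdb (continuous_bernoulliFun k).continuousOn
  rw [htransfer, digitIntegral_sub hdb (by fun_prop) (by fun_prop), digitIntegral_smul,
    digitIntegral_sum hdb _ _ (fun i x ↦ ((d : ℝ) + x) ^ i) fun _ _ ↦ by fun_prop,
    sum_range_succ', bernoulliFun_eval_zero] at hμ
  simp only [digitIntegral_add_pow hb] at hμ
  simp only [powerMoment_zero hdb, Nat.sub_zero, Nat.choose_zero_right, pow_zero, Nat.cast_one,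
    inv_one, mul_one] at hμ
  have hsum : ∑ i ∈ range k, (b : ℝ)⁻¹ * (bernoulli (k - (i + 1)) * k.choose (i + 1) *
      ((b : ℝ) ^ (i + 1))⁻¹) * (b * powerMoment b d (i + 1)) = (b : ℝ)⁻¹ * ∑ i ∈ range k,
        bernoulli (k - (i + 1)) * k.choose (i + 1) * ((b : ℝ) ^ i)⁻¹ * powerMoment b d (i + 1) := by
    rw [mul_sum]
    refine sum_congr rfl fun i _ ↦ ?_
    rw [pow_succ, mul_inv]
    field_simp
  rw [hsum] at hμ
  set S := ∑ i ∈ range k,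
    (bernoulli (k - (i + 1)) : ℝ) * k.choose (i + 1) * ((b : ℝ) ^ i)⁻¹ * powerMoment b d (i + 1)
  rw [bernoulliMoment]
  linear_combination b * hμ - (S + b * bernoulli k) * mul_inv_cancel₀ hb0

/-- The integral of `y ^ i` over `[a, a + 1]`. The limit of `powerMoment b d i` as `b → ∞` is
`powerIntegral d i`. -/
noncomputable def powerIntegral (a : ℝ) (i : ℕ) : ℝ :=
  ((a + 1) ^ (i + 1) - a ^ (i + 1)) / (i + 1)

theorem choose_mul_powerIntegral {i k : ℕ} (hk : k ≤ i) (a : ℝ) :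
    i.choose k * powerIntegral a (i - k) =
      (i + 1).choose k / (i + 1) * ((a + 1) ^ (i + 1 - k) - a ^ (i + 1 - k)) := by
  have hchoose : (i.choose k : ℝ) * (i + 1) = (i + 1).choose k * ((i - k : ℕ) + 1) := by
    have hnat := Nat.choose_mul_succ_eq i k
    rw [Nat.sub_add_comm hk] at hnat
    exact_mod_cast hnat
  rw [powerIntegral, Nat.sub_add_comm hk]
  field_simp
  linear_combination ((a + 1) ^ (i - k + 1) - a ^ (i - k + 1)) * hchoose

/-- Euler–Maclaurin is exact for polynomials. -/
theorem add_pow_eq_sum_bernoulliFun (i : ℕ) (a : ℝ) {x : ℝ} (hx : x ∈ Icc (0 : ℝ) 1) :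
    (a + x) ^ i =
      ∑ k ∈ range (i + 1), i.choose k * powerIntegral a (i - k) * bernoulliFun k x := by
  let G : ℕ → ℝ → ℝ := fun k y ↦ (i + 1).descFactorial k / (i + 1) * y ^ (i + 1 - k)
  have hG : ∀ k ≤ i, ∀ x ∈ Icc (0 : ℝ) 1, HasDerivAt (G k) (G (k + 1) (a + x)) (a + x) := by
    intro k _ x _
    refine ((hasDerivAt_pow (i + 1 - k) (a + x)).const_mul _).congr_deriv ?_
    simp only [G, Nat.descFactorial_succ, Nat.sub_sub]
    push_cast
    ring
  have hexact := abs_sub_bernoulliSum_le (E := 0) hG (fun x _ y _ ↦ by simp [G]) x hx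
  have hi : (i : ℝ) + 1 ≠ 0 := by positivity
  have hpow : G 1 (a + x) = (a + x) ^ i := by simp [G, hi]
  rw [← hpow, sub_eq_zero.1 (abs_nonpos_iff.1 hexact)]
  refine sum_congr rfl fun k hk ↦ ?_
  rw [choose_mul_powerIntegral (Nat.lt_succ_iff.1 (Finset.mem_range.1 hk)),
    Nat.choose_eq_descFactorial_div_factorial,
    Nat.cast_div (Nat.factorial_dvd_descFactorial _ _) (by positivity)]
  ring

theorem powerMoment_recursion (hdb : d < b) (i : ℕ) :
    powerMoment b d i = powerIntegral d i + ((b : ℝ) ^ 2)⁻¹ * ∑ k ∈ range i,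
      i.choose (k + 1) * powerIntegral d (i - (k + 1)) * bernoulliMoment b d (k + 1) := by
  have hb : b ≠ 0 := by lia
  have hb0 : (b : ℝ) ≠ 0 := Nat.cast_ne_zero.2 hb
  have hμ := abs_digitIntegral_sub_le (C := 0) hdb (f := fun x ↦ ((d : ℝ) + x) ^ i)
    (g := fun x ↦ ∑ k ∈ range (i + 1), i.choose k * powerIntegral d (i - k) * bernoulliFun k x)
    (by fun_prop) (by fun_prop)
    fun x hx ↦ by rw [← add_pow_eq_sum_bernoulliFun i d hx, sub_self, abs_zero]
  rw [mul_zero, abs_nonpos_iff, sub_eq_zero,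
    digitIntegral_sum hdb _ _ _ fun _ _ ↦ by fun_prop, sum_range_succ',
    digitIntegral_bernoulliFun_zero hdb] at hμ
  simp only [digitIntegral_bernoulliFun hb] at hμ
  rw [powerMoment, hμ, mul_add, add_comm, mul_sum, mul_sum]
  congr 1
  · rw [Nat.choose_zero_right, Nat.cast_one, one_mul, Nat.sub_zero]
    field_simp
  · exact sum_congr rfl fun k _ ↦ by ring

end MomentRecursion

section MomentExpansion

open Polynomial hiding bernoulli bernoulli_zero bernoulli_one

variable {b d : ℕ}

theorem abs_powerMoment_le (hdb : d < b) (i : ℕ) : |powerMoment b d i| ≤ ((d : ℝ) + 1) ^ i := by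
  have hb : (0 : ℝ) < b := by exact_mod_cast d.zero_le.trans_lt hdb
  have hμ := abs_digitIntegral_le hdb (f := fun x ↦ ((d : ℝ) + x) ^ i) (C := ((d : ℝ) + 1) ^ i)
    fun x hx ↦ by
      rw [abs_of_nonneg (pow_nonneg (add_nonneg d.cast_nonneg hx.1) i)]
      gcongr
      exacts [add_nonneg d.cast_nonneg hx.1, hx.2]
  rw [powerMoment, abs_mul, abs_inv, Nat.abs_cast]
  exact (inv_mul_le_iff₀ hb).2 hμ

theorem hasExpansion_zero_powerMoment (d i : ℕ) :
    HasExpansion 0 (fun b ↦ powerMoment b d i) 0 := by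
  refine .of_bound (((d : ℝ) + 1) ^ i) ?_
  filter_upwards [eventually_gt_atTop d] with b hdb
  simpa using abs_powerMoment_le hdb i

theorem hasExpansion_powerMoment_of_bernoulliMoment {n i : ℕ} {p : ℕ → ℝ[X]}
    (h : ∀ k < i, HasExpansion n (fun b ↦ bernoulliMoment b d (k + 1)) (p (k + 1))) :
    HasExpansion (n + 2) (fun b ↦ powerMoment b d i) (C (powerIntegral d i) + X ^ 2 *
      ∑ k ∈ range i, C (i.choose (k + 1) * powerIntegral d (i - (k + 1))) * p (k + 1)) := by
  have hsum := HasExpansion.sum (s := range i) fun k hk ↦ (h k (Finset.mem_range.1 hk)).const_mul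
    (i.choose (k + 1) * powerIntegral d (i - (k + 1)))
  refine ((hasExpansion_const _ _).add
    (hsum.inv_pow_mul 2 (add_comm n 2).le)).of_eventuallyEq ?_
  filter_upwards [eventually_gt_atTop d] with b hdb
  rw [powerMoment_recursion hdb, inv_pow]

theorem hasExpansion_bernoulliMoment_of_powerMoment {n k : ℕ} (hk : k ≠ 0) {p : ℕ → ℝ[X]}
    {q : ℝ[X]} (h : ∀ i < k, HasExpansion (n - i) (fun b ↦ powerMoment b d (i + 1)) (p (i + 1)))
    (hq : ∀ l < n, (∑ i ∈ range k, C (-((bernoulli (k - (i + 1)) : ℝ) * k.choose (i + 1))) *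
      (X ^ i * p (i + 1))).coeff l = (q * (1 - X ^ k)).coeff l) :
    HasExpansion n (fun b ↦ bernoulliMoment b d k) q := by
  have hsum := HasExpansion.sum (s := range k) fun i hi ↦
    ((h i (Finset.mem_range.1 hi)).inv_pow_mul i (n := n) (by lia)).const_mul
      (-((bernoulli (k - (i + 1)) : ℝ) * k.choose (i + 1)))
  refine .of_mul_one_sub_inv_pow hk ((hsum.of_eventuallyEq ?_).congr_coeff hq)
  filter_upwards [eventually_gt_atTop d] with b hdb
  rw [inv_pow, bernoulliMoment_recursion hdb, ← sum_neg_distrib]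
  exact sum_congr rfl fun i _ ↦ by rw [inv_pow]; ring

theorem hasExpansion_zero_bernoulliMoment {k : ℕ} (hk : k ≠ 0) :
    HasExpansion 0 (fun b ↦ bernoulliMoment b d k) 0 :=
  hasExpansion_bernoulliMoment_of_powerMoment hk (p := 0)
    (fun i _ ↦ by simpa using hasExpansion_zero_powerMoment d (i + 1)) (by simp)

theorem hasExpansion_two_powerMoment (i : ℕ) :
    HasExpansion 2 (fun b ↦ powerMoment b d i) (C (powerIntegral d i)) := by
  simpa using hasExpansion_powerMoment_of_bernoulliMoment (n := 0) (p := 0) (d := d)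
    fun k _ ↦ hasExpansion_zero_bernoulliMoment k.succ_ne_zero

/-- The first terms of the expansion of `powerMoment b d i` in powers of `1 / b`. -/
noncomputable def powerMomentPoly (d : ℕ) : ℕ → ℝ[X]
  | 1 => C (powerIntegral d 1) * (1 - X ^ 2 - X ^ 3)
  | 2 => C (powerIntegral d 2) +
      C (powerIntegral d 1 * (1 - 2 * powerIntegral d 1)) * X ^ 2 -
      C (2 * powerIntegral d 1 ^ 2 + powerIntegral d 2) * X ^ 3
  | 3 => C (powerIntegral d 3) + C (powerIntegral d 1 *
      (3 * powerIntegral d 1 - 3 * powerIntegral d 2 - 1 / 2)) * X ^ 2 +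
      C (powerIntegral d 2 * (3 / 2 - 6 * powerIntegral d 1)) * X ^ 3
  | i => C (powerIntegral d i)

/-- The first terms of the expansion of `bernoulliMoment b d k` in powers of `1 / b`. -/
noncomputable def bernoulliMomentPoly (d : ℕ) : ℕ → ℝ[X]
  | 1 => C (powerIntegral d 1) * (X ^ 3 - X - 1)
  | 2 => C (powerIntegral d 1) - C (powerIntegral d 2) * X
  | 3 => C (3 / 2 * powerIntegral d 2) * X - C (powerIntegral d 1 / 2)
  | _ => 0

theorem powerIntegral_zero (a : ℝ) : powerIntegral a 0 = 1 := by simp [powerIntegral]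

theorem hasExpansion_two_bernoulliMoment {k : ℕ} (hk : k ≠ 0) (hk4 : k < 4) :
    HasExpansion 2 (fun b ↦ bernoulliMoment b d k) (bernoulliMomentPoly d k) := by
  refine hasExpansion_bernoulliMoment_of_powerMoment hk (p := fun i ↦ C (powerIntegral d i))
    (fun i _ ↦ (hasExpansion_two_powerMoment (i + 1)).mono (Nat.sub_le 2 i)) fun l hl ↦ ?_
  interval_cases k <;> interval_cases l <;>
  · simp only [bernoulliMomentPoly, coeff_add, coeff_sub, coeff_mul, coeff_C, coeff_X, coeff_X_pow,
      coeff_one, Finset.Nat.sum_antidiagonal_eq_sum_range_succ_mk, sum_range_succ, sum_range_zero]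
    norm_num [bernoulli_one, bernoulli_two, Nat.choose] <;> ring

theorem hasExpansion_four_powerMoment {i : ℕ} (hi : i ≠ 0) (hi4 : i < 4) :
    HasExpansion 4 (fun b ↦ powerMoment b d i) (powerMomentPoly d i) := by
  refine (hasExpansion_powerMoment_of_bernoulliMoment (n := 2)
    fun k _ ↦ hasExpansion_two_bernoulliMoment k.succ_ne_zero (by lia)).congr_coeff fun l hl ↦ ?_
  interval_cases i <;> interval_cases l <;>
  · simp only [powerMomentPoly, bernoulliMomentPoly, coeff_add, coeff_sub, coeff_mul, coeff_C,
      coeff_X, coeff_X_pow, coeff_one, Finset.Nat.sum_antidiagonal_eq_sum_range_succ_mk,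
      sum_range_succ, sum_range_zero]
    norm_num [powerIntegral_zero, Nat.choose] <;> ring

theorem hasExpansion_bernoulliMoment_of_lt {k : ℕ} (hk : k ≠ 0) (hk3 : k < 3) :
    HasExpansion (5 - k) (fun b ↦ bernoulliMoment b d k) (bernoulliMomentPoly d k) := by
  refine hasExpansion_bernoulliMoment_of_powerMoment hk (p := powerMomentPoly d)
    (fun i hi ↦ (hasExpansion_four_powerMoment i.succ_ne_zero (by lia)).mono (by lia))
    fun l hl ↦ ?_
  interval_cases k <;> interval_cases l <;>
  · simp only [powerMomentPoly, bernoulliMomentPoly, coeff_add, coeff_sub, coeff_mul, coeff_C,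
      coeff_X, coeff_X_pow, coeff_one, Finset.Nat.sum_antidiagonal_eq_sum_range_succ_mk,
      sum_range_succ, sum_range_zero]
    norm_num [bernoulli_one]

theorem hasExpansion_one_bernoulliMoment_four :
    HasExpansion 1 (fun b ↦ bernoulliMoment b d 4) 0 := by
  refine hasExpansion_bernoulliMoment_of_powerMoment four_ne_zero
    (p := fun i ↦ C (powerIntegral d i))
    (fun i _ ↦ (hasExpansion_two_powerMoment (i + 1)).mono (by lia)) fun l hl ↦ ?_
  have hthree : bernoulli 3 = 0 := bernoulli_eq_zero_of_odd (by decide) (by norm_num)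
  interval_cases l
  simp [sum_range_succ, hthree]

theorem hasExpansion_bernoulliMoment {k : ℕ} (hk : k ≠ 0) :
    HasExpansion (5 - k) (fun b ↦ bernoulliMoment b d k) (bernoulliMomentPoly d k) := by
  match k with
  | 1 | 2 => exact hasExpansion_bernoulliMoment_of_lt hk (by lia)
  | 3 => exact hasExpansion_two_bernoulliMoment hk (by lia)
  | 4 => exact hasExpansion_one_bernoulliMoment_four
  | k + 5 => simpa [bernoulliMomentPoly] using hasExpansion_zero_bernoulliMoment hk

theorem hasExpansion_five_powerMoment_one :
    HasExpansion 5 (fun b ↦ powerMoment b d 1) (powerMomentPoly d 1) := by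
  refine (hasExpansion_powerMoment_of_bernoulliMoment (n := 3) fun k hk ↦
    (hasExpansion_bernoulliMoment k.succ_ne_zero).mono (by lia)).congr_coeff fun l hl ↦ ?_
  interval_cases l <;>
  · simp only [powerMomentPoly, bernoulliMomentPoly, coeff_add, coeff_sub, coeff_mul, coeff_C,
      coeff_X, coeff_X_pow, coeff_one, Finset.Nat.sum_antidiagonal_eq_sum_range_succ_mk,
      sum_range_succ, sum_range_zero]
    norm_num [powerIntegral_zero]

theorem hasExpansion_powerMoment {i : ℕ} (hi : i ≠ 0) :
    HasExpansion (6 - i) (fun b ↦ powerMoment b d i) (powerMomentPoly d i) := by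
  match i with
  | 1 => exact hasExpansion_five_powerMoment_one
  | 2 | 3 => exact (hasExpansion_four_powerMoment hi (by lia)).mono (by lia)
  | i + 4 => exact (hasExpansion_two_powerMoment (i + 4)).mono (by lia)

end MomentExpansion

section Kempner

open Polynomial hiding bernoulli bernoulli_zero bernoulli_one
open scoped Nat

variable {b d : ℕ}

/-- The rescaled endpoint contribution `1 - d⁻ᵏ + (d + 1)⁻ᵏ`: for large `b`, the Euler–Maclaurin
boundary terms come from the three endpoints `b`, `b * d` and `b * (d + 1)`. -/
noncomputable def boundaryPowerSum (d k : ℕ) : ℝ :=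
  1 + (((d : ℝ) + 1) ^ k)⁻¹ - ((d : ℝ) ^ k)⁻¹

/-- The series of `ζ(s)` with the term of index `d` left out. -/
noncomputable def zetaOmit (d s : ℕ) : ℝ :=
  zetaR s - ((d : ℝ) ^ s)⁻¹

theorem mul_bernoulliCoeff_zero (hd : 1 ≤ d) (hb : 1 ≤ b) :
    b * bernoulliCoeff b d 0 = b * Real.log b - b * Real.log (1 + 1 / d) := by
  have hd0 : (d : ℝ) ≠ 0 := by positivity
  have hb0 : (b : ℝ) ≠ 0 := by positivity
  have hd1 : (d : ℝ) + 1 ≠ 0 := by positivity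
  simp only [bernoulliCoeff, logIterDeriv]
  push_cast
  rw [one_add_div hd0, Real.log_div hd1 hd0, Real.log_mul hb0 hb0, Real.log_mul hb0 hd1,
    Real.log_mul hb0 hd0, Nat.factorial_zero, Nat.cast_one]
  ring

theorem inv_mul_bernoulliCoeff_succ (hb : 1 ≤ b) (k : ℕ) :
    (b : ℝ)⁻¹ * bernoulliCoeff b d (k + 1) = (b : ℝ)⁻¹ ^ (k + 2) *
      ((-1) ^ k / (k + 1) * ((b : ℝ)⁻¹ ^ (k + 1) - boundaryPowerSum d (k + 1))) := by
  have hb0 : (b : ℝ) ≠ 0 := by positivity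
  simp only [bernoulliCoeff, logIterDeriv, boundaryPowerSum, Nat.factorial_succ]
  push_cast
  simp only [mul_pow, mul_inv, inv_pow]
  field_simp
  ring

theorem mul_powerCoeff (hb : 1 ≤ b) (j : ℕ) :
    b * powerCoeff b d j = (b : ℝ)⁻¹ ^ j *
      ((-1) ^ j * (zetaPartialSum (j + 1) b - ((d : ℝ) ^ (j + 1))⁻¹)) := by
  have hb0 : (b : ℝ) ≠ 0 := by positivity
  rw [powerCoeff, pow_succ (b : ℝ), mul_inv, inv_pow]
  field_simp

/-- The first terms of the expansion in powers of `1 / b` of the contribution of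
`bernoulliMoment b d (k + 1)` to `irwinSum b d 0`, after division by `X ^ (k + 2)`. -/
noncomputable def bernoulliTermPoly (d : ℕ) : ℕ → ℝ[X]
  | 0 => C (powerIntegral d 1) * (C (boundaryPowerSum d 1) +
      C (boundaryPowerSum d 1 - 1) * X - X ^ 2 - C (boundaryPowerSum d 1) * X ^ 3)
  | 1 => C (boundaryPowerSum d 2 * powerIntegral d 1 / 2) -
      C (boundaryPowerSum d 2 * powerIntegral d 2 / 2) * X - C (powerIntegral d 1 / 2) * X ^ 2
  | 2 => C (boundaryPowerSum d 3 * powerIntegral d 1 / 6) -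
      C (boundaryPowerSum d 3 * powerIntegral d 2 / 2) * X
  | _ => 0

theorem hasExpansion_bernoulliTermPoly (d k : ℕ) :
    HasExpansion (4 - k) (fun b ↦ (-1) ^ k / (k + 1) *
      ((b : ℝ)⁻¹ ^ (k + 1) - boundaryPowerSum d (k + 1)) * bernoulliMoment b d (k + 1))
      (bernoulliTermPoly d k) := by
  have hcoeff : HasExpansion (4 - k)
      (fun b ↦ (-1) ^ k / (k + 1) * ((b : ℝ)⁻¹ ^ (k + 1) - boundaryPowerSum d (k + 1)))
      (C ((-1) ^ k / (k + 1) : ℝ) * (X ^ (k + 1) - C (boundaryPowerSum d (k + 1)))) :=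
    (hasExpansion_eval _ _).of_eventuallyEq (.of_forall fun b ↦ by simp)
  refine (hcoeff.mul ((hasExpansion_bernoulliMoment k.succ_ne_zero).mono
    (by lia))).congr_coeff fun l hl ↦ ?_
  have : k < 4 := by lia
  interval_cases k <;> interval_cases l <;>
  · simp only [bernoulliTermPoly, bernoulliMomentPoly, coeff_add, coeff_sub, coeff_mul, coeff_C,
      coeff_X, coeff_X_pow, coeff_one, coeff_zero,
      Finset.Nat.sum_antidiagonal_eq_sum_range_succ_mk, sum_range_succ, sum_range_zero]
    norm_num <;> ring

/-- The first terms of the expansion in powers of `1 / b` of the contribution of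
`powerMoment b d j` to `irwinSum b d 0`, up to sign and after division by `X ^ j`. -/
noncomputable def powerTermPoly (d : ℕ) : ℕ → ℝ[X]
  | 1 => C (powerIntegral d 1) * (-C (zetaOmit d 2) + X + C (zetaOmit d 2 + 1 / 2) * X ^ 2 +
      C (zetaOmit d 2 - 5 / 6) * X ^ 3 - C (3 / 2) * X ^ 4)
  | 2 => C (zetaOmit d 3 * powerIntegral d 2) +
      C (zetaOmit d 3 * (powerIntegral d 1 * (1 - 2 * powerIntegral d 1)) -
        powerIntegral d 2 / 2) * X ^ 2 -
      C (zetaOmit d 3 * (2 * powerIntegral d 1 ^ 2 + powerIntegral d 2) +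
        powerIntegral d 2 / 2) * X ^ 3
  | 3 => -C (zetaOmit d 4) * (C (powerIntegral d 3) + C (powerIntegral d 1 *
      (3 * powerIntegral d 1 - 3 * powerIntegral d 2 - 1 / 2)) * X ^ 2)
  | j => C ((-1) ^ j * zetaOmit d (j + 1) * powerIntegral d j)

theorem hasExpansion_powerTermPoly (d : ℕ) {j : ℕ} (hj : j ≠ 0) :
    HasExpansion (6 - j) (fun b ↦ (-1) ^ j * (zetaPartialSum (j + 1) b - ((d : ℝ) ^ (j + 1))⁻¹) *
      powerMoment b d j) (powerTermPoly d j) := by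
  refine (((hasExpansion_zetaPoly hj).sub (hasExpansion_const _ _)).const_mul ((-1) ^ j) |>.mul
    (hasExpansion_powerMoment hj)).congr_coeff fun l hl ↦ ?_
  have hj1 : 1 ≤ j := by lia
  have hj6 : j < 6 := by lia
  interval_cases j <;> interval_cases l <;>
  · simp only [powerTermPoly, powerMomentPoly, zetaPoly, zetaOmit, coeff_add,
      coeff_sub, coeff_neg, coeff_mul, coeff_C, coeff_X, coeff_X_pow, coeff_one,
      Finset.Nat.sum_antidiagonal_eq_sum_range_succ_mk, sum_range_succ, sum_range_zero]
    norm_num <;> ring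

/-- The coefficient of `1 / b ^ i` in the expansion of `irwinSum b d 0`, for `1 ≤ i ≤ 5`. -/
noncomputable def kempnerCoeff (d : ℕ) : ℕ → ℝ
  | 1 => zetaOmit d 2 * powerIntegral d 1
  | 2 => (boundaryPowerSum d 1 - 1) * powerIntegral d 1 - zetaOmit d 3 * powerIntegral d 2
  | 3 => (boundaryPowerSum d 1 + boundaryPowerSum d 2 / 2 - 3 / 2 - zetaOmit d 2) *
      powerIntegral d 1 + zetaOmit d 4 * powerIntegral d 3
  | 4 => (boundaryPowerSum d 3 / 6 - 1 / 6 - zetaOmit d 2) * powerIntegral d 1 +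
      (1 - boundaryPowerSum d 2) / 2 * powerIntegral d 2 -
      zetaOmit d 3 * (powerIntegral d 1 * (1 - 2 * powerIntegral d 1)) -
      zetaOmit d 5 * powerIntegral d 4
  | 5 => (1 - boundaryPowerSum d 1) * powerIntegral d 1 +
      (1 - boundaryPowerSum d 3) / 2 * powerIntegral d 2 +
      zetaOmit d 3 * (2 * powerIntegral d 1 ^ 2 + powerIntegral d 2) +
      zetaOmit d 4 * (powerIntegral d 1 *
        (3 * powerIntegral d 1 - 3 * powerIntegral d 2 - 1 / 2)) +
      zetaOmit d 6 * powerIntegral d 5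
  | _ => 0

theorem coeff_sum_bernoulliTermPoly_sub_sum_powerTermPoly (d : ℕ) {l : ℕ} (hl : l < 6) :
    (∑ k ∈ range 6, X ^ (k + 2) * bernoulliTermPoly d k -
      ∑ j ∈ Finset.Ico 1 6, X ^ j * powerTermPoly d j).coeff l =
      kempnerCoeff d l := by
  simp only [Finset.sum_Ico_eq_sum_range, sum_range_succ, sum_range_zero, coeff_add, coeff_sub,
    coeff_X_pow_mul']
  interval_cases l <;>
  · simp only [kempnerCoeff, bernoulliTermPoly, powerTermPoly, coeff_add, coeff_sub, coeff_neg,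
      coeff_mul, coeff_C, coeff_X, coeff_X_pow, coeff_zero,
      Finset.Nat.sum_antidiagonal_eq_sum_range_succ_mk, sum_range_succ, sum_range_zero]
    norm_num <;> ring

theorem hasExpansion_sum_bernoulliMoment (d : ℕ) :
    HasExpansion 6 (fun b ↦ ∑ k ∈ range 6,
      (b : ℝ)⁻¹ * bernoulliCoeff b d (k + 1) * bernoulliMoment b d (k + 1))
      (∑ k ∈ range 6, X ^ (k + 2) * bernoulliTermPoly d k) := by
  refine HasExpansion.sum fun k _ ↦ ((hasExpansion_bernoulliTermPoly d k).inv_pow_mul (k + 2)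
    (by lia)).of_eventuallyEq ?_
  filter_upwards [eventually_ge_atTop 1] with b hb
  rw [inv_mul_bernoulliCoeff_succ hb, mul_assoc]

theorem hasExpansion_sum_powerMoment (d : ℕ) :
    HasExpansion 6 (fun b ↦ ∑ j ∈ Finset.Ico 1 6, b * powerCoeff b d j * powerMoment b d j)
      (∑ j ∈ Finset.Ico 1 6, X ^ j * powerTermPoly d j) := by
  refine HasExpansion.sum fun j hj ↦ ((hasExpansion_powerTermPoly d
    (Nat.one_le_iff_ne_zero.1 (Finset.mem_Ico.1 hj).1)).inv_pow_mul j (by lia)).of_eventuallyEq ?_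
  filter_upwards [eventually_ge_atTop 1] with b hb
  rw [mul_powerCoeff hb, mul_assoc]

theorem hasExpansion_irwinSum_zero (hd : 1 ≤ d) :
    HasExpansion 6
      (fun b ↦ irwinSum b d 0 - (b * Real.log b - b * Real.log (1 + 1 / (d : ℝ))))
      (∑ i ∈ range 6, C (kempnerCoeff d i) * X ^ i) := by
  have hrem : HasExpansion 6 (fun b ↦ irwinSum b d 0 - (b * bernoulliCoeff b d 0 +
      ∑ k ∈ range 6, (b : ℝ)⁻¹ * bernoulliCoeff b d (k + 1) * bernoulliMoment b d (k + 1) -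
      ∑ j ∈ Finset.Ico 1 6, b * powerCoeff b d j * powerMoment b d j)) 0 := by
    refine .of_bound (2 * 6 ! + ((d : ℝ) + 1) ^ 6 * zetaR (6 + 1)) ?_
    filter_upwards [eventually_gt_atTop d] with b hdb
    simpa using abs_irwinSum_zero_sub_le hd hdb (n := 6) (by norm_num)
  have hsum := hrem.add ((hasExpansion_sum_bernoulliMoment d).sub (hasExpansion_sum_powerMoment d))
  refine (hsum.of_eventuallyEq ?_).congr_coeff fun l hl ↦ ?_
  · filter_upwards [eventually_ge_atTop 1] with b hb
    rw [mul_bernoulliCoeff_zero hd hb]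
    ring
  · rw [zero_add, coeff_sum_bernoulliTermPoly_sub_sum_powerTermPoly d hl]
    simp [hl]

theorem kempnerCoeff_one (hd : 1 ≤ d) : kempnerCoeff d 1 =
    ((d : ℝ) + 1 / 2) * (zetaR 2 - ((d : ℝ) ^ 2)⁻¹) := by
  have hd0 : (d : ℝ) ≠ 0 := by positivity
  simp only [kempnerCoeff, zetaOmit, powerIntegral]
  field_simp
  ring

theorem kempnerCoeff_two (hd : 1 ≤ d) : kempnerCoeff d 2 =
    -((d : ℝ) ^ 2 + d + 1 / 3) * zetaR 3
      + (9 * (d : ℝ) ^ 2 + 8 * d + 2) / (6 * (d : ℝ) ^ 3 * (d + 1)) := by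
  have hd0 : (d : ℝ) ≠ 0 := by positivity
  have hd1 : (d : ℝ) + 1 ≠ 0 := by positivity
  simp only [kempnerCoeff, zetaOmit, powerIntegral, boundaryPowerSum]
  field_simp
  ring

theorem kempnerCoeff_three (hd : 1 ≤ d) : kempnerCoeff d 3 =
    ((d : ℝ) + 1 / 2) * ((d : ℝ) ^ 2 + d + 1 / 2) * zetaR 4
      - ((d : ℝ) + 1 / 2) * zetaR 2
      - ((d : ℝ) + 1 / 2) * (2 * (d : ℝ) ^ 4 + 6 * (d : ℝ) ^ 3 + 6 * (d : ℝ) ^ 2 + 4 * d + 1)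
        / (2 * (d : ℝ) ^ 4 * ((d : ℝ) + 1) ^ 2) := by
  have hd0 : (d : ℝ) ≠ 0 := by positivity
  have hd1 : (d : ℝ) + 1 ≠ 0 := by positivity
  simp only [kempnerCoeff, zetaOmit, powerIntegral, boundaryPowerSum]
  field_simp
  ring

theorem kempnerCoeff_four (hd : 1 ≤ d) : kempnerCoeff d 4 =
    -((d : ℝ) ^ 4 + 2 * (d : ℝ) ^ 3 + 2 * (d : ℝ) ^ 2 + d + 1 / 5) * zetaR 5
      + (2 * (d : ℝ) + 1) * d * zetaR 3 - ((d : ℝ) + 1 / 2) * zetaR 2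
      + (60 * (d : ℝ) ^ 7 + 240 * (d : ℝ) ^ 6 + 500 * (d : ℝ) ^ 5 + 705 * (d : ℝ) ^ 4
          + 627 * (d : ℝ) ^ 3 + 331 * (d : ℝ) ^ 2 + 96 * d + 12)
        / (60 * (d : ℝ) ^ 5 * ((d : ℝ) + 1) ^ 3) := by
  have hd0 : (d : ℝ) ≠ 0 := by positivity
  have hd1 : (d : ℝ) + 1 ≠ 0 := by positivity
  simp only [kempnerCoeff, zetaOmit, powerIntegral, boundaryPowerSum]
  field_simp
  ring

theorem kempnerCoeff_five (hd : 1 ≤ d) : kempnerCoeff d 5 =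
    ((d : ℝ) + 1 / 2) * ((d : ℝ) ^ 2 + d + 1) * ((d : ℝ) ^ 2 + d + 1 / 3) * zetaR 6
      - 3 * ((d : ℝ) + 1 / 2) * (d : ℝ) ^ 2 * zetaR 4
      + (3 * (d : ℝ) ^ 2 + 3 * d + 5 / 6) * zetaR 3
      - ((d : ℝ) + 1 / 2) * (9 * (d : ℝ) ^ 6 + 38 * (d : ℝ) ^ 5 + 56 * (d : ℝ) ^ 4
          + 44 * (d : ℝ) ^ 3 + 22 * (d : ℝ) ^ 2 + 7 * d + 1)
        / (3 * (d : ℝ) ^ 6 * ((d : ℝ) + 1) ^ 3) := by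
  have hd0 : (d : ℝ) ≠ 0 := by positivity
  have hd1 : (d : ℝ) + 1 ≠ 0 := by positivity
  simp only [kempnerCoeff, zetaOmit, powerIntegral, boundaryPowerSum]
  field_simp
  ring

end Kempner

theorem kempner_d_asymptotic (d : ℕ) (hd : 1 ≤ d) (a1 a2 a3 a4 a5 : ℝ)
    (h1 : a1 = ((d : ℝ) + 1 / 2) * (zetaR 2 - ((d : ℝ) ^ 2)⁻¹))
    (h2 : a2 = -((d : ℝ) ^ 2 + d + 1 / 3) * zetaR 3
      + (9 * (d : ℝ) ^ 2 + 8 * d + 2) / (6 * (d : ℝ) ^ 3 * (d + 1)))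
    (h3 : a3 = ((d : ℝ) + 1 / 2) * ((d : ℝ) ^ 2 + d + 1 / 2) * zetaR 4
      - ((d : ℝ) + 1 / 2) * zetaR 2
      - ((d : ℝ) + 1 / 2) * (2 * (d : ℝ) ^ 4 + 6 * (d : ℝ) ^ 3 + 6 * (d : ℝ) ^ 2 + 4 * d + 1)
        / (2 * (d : ℝ) ^ 4 * ((d : ℝ) + 1) ^ 2))
    (h4 : a4 = -((d : ℝ) ^ 4 + 2 * (d : ℝ) ^ 3 + 2 * (d : ℝ) ^ 2 + d + 1 / 5) * zetaR 5
      + (2 * (d : ℝ) + 1) * d * zetaR 3 - ((d : ℝ) + 1 / 2) * zetaR 2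
      + (60 * (d : ℝ) ^ 7 + 240 * (d : ℝ) ^ 6 + 500 * (d : ℝ) ^ 5 + 705 * (d : ℝ) ^ 4
          + 627 * (d : ℝ) ^ 3 + 331 * (d : ℝ) ^ 2 + 96 * d + 12)
        / (60 * (d : ℝ) ^ 5 * ((d : ℝ) + 1) ^ 3))
    (h5 : a5 = ((d : ℝ) + 1 / 2) * ((d : ℝ) ^ 2 + d + 1) * ((d : ℝ) ^ 2 + d + 1 / 3) * zetaR 6
      - 3 * ((d : ℝ) + 1 / 2) * (d : ℝ) ^ 2 * zetaR 4
      + (3 * (d : ℝ) ^ 2 + 3 * d + 5 / 6) * zetaR 3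
      - ((d : ℝ) + 1 / 2) * (9 * (d : ℝ) ^ 6 + 38 * (d : ℝ) ^ 5 + 56 * (d : ℝ) ^ 4
          + 44 * (d : ℝ) ^ 3 + 22 * (d : ℝ) ^ 2 + 7 * d + 1)
        / (3 * (d : ℝ) ^ 6 * ((d : ℝ) + 1) ^ 3)) :
    (fun b : ℕ => irwinSum b d 0 -
      ((b : ℝ) * Real.log b - (b : ℝ) * Real.log (1 + 1 / (d : ℝ))
        + a1 / b + a2 / (b : ℝ) ^ 2 + a3 / (b : ℝ) ^ 3 + a4 / (b : ℝ) ^ 4 + a5 / (b : ℝ) ^ 5))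
      =O[atTop] fun b : ℕ => ((b : ℝ) ^ 6)⁻¹ := by
  refine (hasExpansion_irwinSum_zero hd).congr (fun b ↦ ?_) fun b ↦ inv_pow _ _
  subst h1 h2 h3 h4 h5
  rw [← kempnerCoeff_one hd, ← kempnerCoeff_two hd, ← kempnerCoeff_three hd,
    ← kempnerCoeff_four hd, ← kempnerCoeff_five hd]
  have hzero : kempnerCoeff d 0 = 0 := rfl
  simp only [sum_range_succ, sum_range_zero, hzero, Polynomial.eval_add, Polynomial.eval_mul,
    Polynomial.eval_zero, Polynomial.eval_C, Polynomial.eval_pow, Polynomial.eval_X]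
  ring
end
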